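/- (Backward uniqueness Carleman estimate in a cylindrical shell.) Let d₁ ≥ 1 and d₂ ≥ 0 be integers. For x ∈ ℝ^{d₁+d₂} write r := √(x₁²+…+x_{d₁}²) and |z| := √(x_{d₁+1}²+…+x_{d₁+d₂}²). There exist constants C₀* ≥ 1 and C ≥ 1 depending only on d₁+d₂ such that for every C₀ ≥ C₀* the following holds. Let T > 0, 0 < r₋ < r₊, let 𝒞 := {(t,x) : t ∈ [0,T], r₋ ≤ r ≤ r₊, |z| ≤ r₊}, and let u be a smooth real-valued function on an open neighborhood of 𝒞 obeying |Lu| ≤ (1/(C₀T))|u| + (1/(C₀T)^{1/2})|∇u| on 𝒞, where L := ∂ₜ + Δ (spatial Laplacian). Assume r₋² ≥ 4C₀T. Then ∫_0^{T/4} ∫_{{10r₋ ≤ r ≤ r₊/2, |z| ≤ r₊/2}} ( T^{−1}|u|² + |∇u|² ) dx dt ≤ C C₀ e^{−r₋r₊/(4C₀T)} ( X + e^{2r₊²/(C₀T)} Y ), where X := ∬_𝒞 e^{2|x|²/(C₀T)} ( T^{−1}|u(t,x)|² + |∇u(t,x)|² ) dx dt and Y := ∫_{{r₋ ≤ r ≤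 r₊, |z| ≤ r₊}} |u(0,x)|² dx. -/

import Mathlib

noncomputable section

open MeasureTheory Real Set

/-- Spatial partial derivative in the `i`-th coordinate direction. -/
def pdg {d : ℕ} (i : Fin d) (f : EuclideanSpace ℝ (Fin d) → ℝ)
    (x : EuclideanSpace ℝ (Fin d)) : ℝ :=
  fderiv ℝ f x (EuclideanSpace.single i 1)

/-- Spatial Laplacian. -/
def lapg {d : ℕ} (f : EuclideanSpace ℝ (Fin d) → ℝ) (x : EuclideanSpace ℝ (Fin d)) : ℝ :=
  ∑ i, pdg i (pdg i f) x

/-- Time derivative. -/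
def tdg {d : ℕ} (f : ℝ → EuclideanSpace ℝ (Fin d) → ℝ) (t : ℝ)
    (x : EuclideanSpace ℝ (Fin d)) : ℝ :=
  deriv (fun s => f s x) t

/-- The backward heat operator `L = ∂ₜ + Δ` acting on scalar functions. -/
def bheat {d : ℕ} (f : ℝ → EuclideanSpace ℝ (Fin d) → ℝ) (t : ℝ)
    (x : EuclideanSpace ℝ (Fin d)) : ℝ :=
  tdg f t x + lapg (f t) x

/-- The "axial" radius `r = √(x₁² + ⋯ + x_{d₁}²)` in `ℝ^{d₁+d₂}`. -/
def radP (d₁ d₂ : ℕ) (x : EuclideanSpace ℝ (Fin (d₁ + d₂))) : ℝ :=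
  Real.sqrt (∑ i : Fin (d₁ + d₂), if (i : ℕ) < d₁ then x i ^ 2 else 0)

/-- The "vertical" radius `|z| = √(x_{d₁+1}² + ⋯ + x_{d₁+d₂}²)` in `ℝ^{d₁+d₂}`. -/
def zradP (d₁ d₂ : ℕ) (x : EuclideanSpace ℝ (Fin (d₁ + d₂))) : ℝ :=
  Real.sqrt (∑ i : Fin (d₁ + d₂), if (i : ℕ) < d₁ then 0 else x i ^ 2)

open scoped ContDiff Topology

/-!
Let `F = ∂ₜg - Δg - |∇g|²`. Commuting `L = ∂ₜ + Δ` past `e^g` shows that the time derivative of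
`∫ e^g (|∇u|² + F u² / 2) dx` is at least `∫ e^g (LF u² / 2 + 2 D²g(∇u, ∇u) - |Lu|² / 2) dx`, the
Carleman inequality. It is applied to the product of the solution with a cutoff to the interior of
the shell and to the weight `g = α (T₀ - t) r + |x|² / (C₀ T)` with `α = r₊ / (2 C₀ T²)`: the
quadratic term makes `g` uniformly convex, the factor `T₀ - t` makes `LF` large, and together they
absorb `|Lu|²` wherever the cutoff is `1`.

The final time `T₀ ∈ [T/2, T]` is chosen by pigeonhole so that the energy on its slice is at most
`2/T` times the space-time energy. At times `t ≤ T/4` the radial part of `g` is at least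
`5 κ r₋ r₊ / 4` on `r ≥ 10 r₋`, where `κ = 1 / (C₀ T)`, but at most `κ r₋ r₊` near the inner edge of
the shell, and this gap is the exponential gain.
-/

section DirectionalDerivative

variable {H : Type*} [NormedAddCommGroup H] [NormedSpace ℝ H] {f g : H → ℝ} {z : H}

/-- The directional derivative `∂ᵥ f` as a function of the base point, so that it can be
iterated. -/
def dirDeriv (v : H) (f : H → ℝ) (z : H) : ℝ :=
  fderiv ℝ f z v

@[fun_prop]
lemma differentiableAt_of_contDiff (hf : ContDiff ℝ ∞ f) : DifferentiableAt ℝ f z :=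
  hf.differentiable (by simp) z

@[fun_prop]
lemma contDiff_dirDeriv (v : H) (hf : ContDiff ℝ ∞ f) : ContDiff ℝ ∞ (dirDeriv v f) :=
  (hf.fderiv_right (m := ∞) (by norm_cast)).clm_apply contDiff_const

lemma dirDeriv_congr (h : f =ᶠ[𝓝 z] g) (v : H) : dirDeriv v f z = dirDeriv v g z := by
  simp only [dirDeriv, h.fderiv_eq]

lemma dirDeriv_eventuallyEq (h : f =ᶠ[𝓝 z] g) (v : H) : dirDeriv v f =ᶠ[𝓝 z] dirDeriv v g :=
  h.eventuallyEq_nhds.mono fun _ hy => dirDeriv_congr hy v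

lemma dirDeriv_const (v : H) (c : ℝ) : dirDeriv v (fun _ => c) = 0 := by
  ext; simp [dirDeriv]

lemma dirDeriv_add (hf : DifferentiableAt ℝ f z) (hg : DifferentiableAt ℝ g z) (v : H) :
    dirDeriv v (fun z => f z + g z) z = dirDeriv v f z + dirDeriv v g z := by
  simp [dirDeriv, fderiv_fun_add hf hg]

lemma dirDeriv_sub (hf : DifferentiableAt ℝ f z) (hg : DifferentiableAt ℝ g z) (v : H) :
    dirDeriv v (fun z => f z - g z) z = dirDeriv v f z - dirDeriv v g z := by
  simp [dirDeriv, fderiv_fun_sub hf hg]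

lemma dirDeriv_mul (hf : DifferentiableAt ℝ f z) (hg : DifferentiableAt ℝ g z) (v : H) :
    dirDeriv v (fun z => f z * g z) z = f z * dirDeriv v g z + g z * dirDeriv v f z := by
  simp [dirDeriv, fderiv_fun_mul hf hg]

lemma dirDeriv_const_mul (c : ℝ) (hf : DifferentiableAt ℝ f z) (v : H) :
    dirDeriv v (fun z => c * f z) z = c * dirDeriv v f z := by
  simp [dirDeriv, fderiv_const_mul hf]

lemma dirDeriv_sum {ι : Type*} (s : Finset ι) {f : ι → H → ℝ}
    (hf : ∀ i ∈ s, DifferentiableAt ℝ (f i) z) (v : H) :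
    dirDeriv v (fun z => ∑ i ∈ s, f i z) z = ∑ i ∈ s, dirDeriv v (f i) z := by
  simp [dirDeriv, fderiv_fun_sum hf]

lemma dirDeriv_comp {φ : ℝ → ℝ} {φ' : ℝ} (hφ : HasDerivAt φ φ' (f z))
    (hf : DifferentiableAt ℝ f z) (v : H) :
    dirDeriv v (fun z => φ (f z)) z = φ' * dirDeriv v f z := by
  have h : fderiv ℝ (φ ∘ f) z = _ := (hφ.comp_hasFDerivAt z hf.hasFDerivAt).fderiv
  simp [dirDeriv, ← Function.comp_def, h]

lemma dirDeriv_comm (hf : ContDiffAt ℝ 2 f z) (v w : H) :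
    dirDeriv v (dirDeriv w f) z = dirDeriv w (dirDeriv v f) z := by
  have hd : DifferentiableAt ℝ (fderiv ℝ f) z :=
    (hf.fderiv_right (m := 1) (by norm_num)).differentiableAt (by norm_num)
  have key (v w : H) : dirDeriv v (dirDeriv w f) z = fderiv ℝ (fderiv ℝ f) z v w := by
    change fderiv ℝ (fun y => fderiv ℝ f y w) z v = _
    simp [fderiv_clm_apply hd (differentiableAt_const w)]
  have hsymm : IsSymmSndFDerivAt ℝ f z :=
    hf.isSymmSndFDerivAt (by simp [minSmoothness_of_isRCLikeNormedField])
  rw [key, key, hsymm]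

lemma eventually_differentiableAt (hf : ContDiffAt ℝ 2 f z) :
    ∀ᶠ y in 𝓝 z, DifferentiableAt ℝ f y :=
  (hf.eventually (by simp)).mono fun _ hy => hy.differentiableAt (by simp)

lemma differentiableAt_dirDeriv (hf : ContDiffAt ℝ 2 f z) (v : H) :
    DifferentiableAt ℝ (dirDeriv v f) z :=
  ((hf.fderiv_right (m := 1) (by norm_num)).clm_apply contDiffAt_const).differentiableAt (by simp)

lemma dirDeriv_dirDeriv_add (hf : ContDiffAt ℝ 2 f z) (hg : ContDiffAt ℝ 2 g z) (v w : H) :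
    dirDeriv v (dirDeriv w (fun z => f z + g z)) z =
      dirDeriv v (dirDeriv w f) z + dirDeriv v (dirDeriv w g) z := by
  have hfirst : dirDeriv w (fun z => f z + g z) =ᶠ[𝓝 z]
      fun y => dirDeriv w f y + dirDeriv w g y := by
    filter_upwards [eventually_differentiableAt hf, eventually_differentiableAt hg] with y hfy hgy
    exact dirDeriv_add hfy hgy w
  rw [dirDeriv_congr hfirst,
    dirDeriv_add (differentiableAt_dirDeriv hf w) (differentiableAt_dirDeriv hg w)]

lemma dirDeriv_dirDeriv_mul (hf : ContDiffAt ℝ 2 f z) (hg : ContDiffAt ℝ 2 g z) (v w : H) :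
    dirDeriv v (dirDeriv w (fun z => f z * g z)) z =
      f z * dirDeriv v (dirDeriv w g) z + dirDeriv v f z * dirDeriv w g z
        + dirDeriv w f z * dirDeriv v g z + g z * dirDeriv v (dirDeriv w f) z := by
  have hfirst : dirDeriv w (fun z => f z * g z) =ᶠ[𝓝 z]
      fun y => f y * dirDeriv w g y + g y * dirDeriv w f y := by
    filter_upwards [eventually_differentiableAt hf, eventually_differentiableAt hg] with y hfy hgy
    exact dirDeriv_mul hfy hgy w
  have hf₀ := hf.differentiableAt (by simp)
  have hg₀ := hg.differentiableAt (by simp)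
  have hfw := differentiableAt_dirDeriv hf w
  have hgw := differentiableAt_dirDeriv hg w
  rw [dirDeriv_congr hfirst, dirDeriv_add (hf₀.fun_mul hgw) (hg₀.fun_mul hfw),
    dirDeriv_mul hf₀ hgw, dirDeriv_mul hg₀ hfw]
  ring

lemma dirDeriv_dirDeriv_comp {φ φ' : ℝ → ℝ} {φ'' : ℝ}
    (hφ : ∀ᶠ y in 𝓝 (f z), HasDerivAt φ (φ' y) y) (hφ' : HasDerivAt φ' φ'' (f z))
    (hf : ContDiffAt ℝ 2 f z) (v w : H) :
    dirDeriv v (dirDeriv w (fun z => φ (f z))) z =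
      φ'' * (dirDeriv v f z * dirDeriv w f z) + φ' (f z) * dirDeriv v (dirDeriv w f) z := by
  have hfirst : dirDeriv w (fun z => φ (f z)) =ᶠ[𝓝 z] fun y => φ' (f y) * dirDeriv w f y := by
    filter_upwards [eventually_differentiableAt hf, hf.continuousAt.eventually hφ] with y hfy hφy
    exact dirDeriv_comp hφy hfy w
  have hf₀ := hf.differentiableAt (by simp)
  rw [dirDeriv_congr hfirst,
    dirDeriv_mul (hφ'.differentiableAt.fun_comp' z hf₀) (differentiableAt_dirDeriv hf w),
    dirDeriv_comp hφ' hf₀]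
  ring

end DirectionalDerivative

/-- Space-time `ℝ × ℝᵈ`, with the time coordinate first. -/
abbrev Spacetime (d : ℕ) : Type :=
  ℝ × EuclideanSpace ℝ (Fin d)

/-- The time derivative. -/
local notation:max "∂ₜ" => dirDeriv (1, 0)

/-- The `i`-th spatial partial derivative. -/
local notation:max "∂[" i "]" => dirDeriv (0, EuclideanSpace.single i 1)

section GammaCalculus

variable {d : ℕ}

/-- The carré du champ `Γ(f, g) = ∇f · ∇g` of the spatial Laplacian; in particular
`Γ(f, f) = |∇f|²`. -/
def gradDot (f g : Spacetime d → ℝ) (z : Spacetime d) : ℝ :=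
  ∑ i, ∂[i] f z * ∂[i] g z

/-- The spatial Laplacian `Δ f` on space-time. -/
def lap (f : Spacetime d → ℝ) (z : Spacetime d) : ℝ :=
  ∑ i, ∂[i] (∂[i] f) z

/-- The spatial Hessian of `f` as a quadratic form, `∑ᵢⱼ ∂ᵢ∂ⱼf ξᵢ ξⱼ`. -/
def hessForm (f : Spacetime d → ℝ) (z : Spacetime d) (ξ : Fin d → ℝ) : ℝ :=
  ∑ i, ∑ j, ∂[i] (∂[j] f) z * (ξ i * ξ j)

/-- The spatial divergence `∇·(φ ∇f) = ∇φ·∇f + φ Δf`. -/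
def divGrad (φ f : Spacetime d → ℝ) (z : Spacetime d) : ℝ :=
  gradDot φ f z + φ z * lap f z

/-- The backward heat operator `L = ∂ₜ + Δ` on space-time. -/
def backwardHeat (f : Spacetime d → ℝ) (z : Spacetime d) : ℝ :=
  ∂ₜ f z + lap f z

variable {f g h : Spacetime d → ℝ} {z : Spacetime d}

lemma gradDot_comm (f g : Spacetime d → ℝ) (z : Spacetime d) : gradDot f g z = gradDot g f z :=
  Finset.sum_congr rfl fun _ _ => mul_comm _ _

lemma gradDot_self (f : Spacetime d → ℝ) (z : Spacetime d) :
    gradDot f f z = ∑ i, ∂[i] f z ^ 2 :=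
  Finset.sum_congr rfl fun _ _ => (sq _).symm

lemma gradDot_self_nonneg (f : Spacetime d → ℝ) (z : Spacetime d) : 0 ≤ gradDot f f z :=
  Finset.sum_nonneg fun _ _ => mul_self_nonneg _

lemma gradDot_sq_le (f g : Spacetime d → ℝ) (z : Spacetime d) :
    gradDot f g z ^ 2 ≤ gradDot f f z * gradDot g g z := by
  rw [gradDot_self, gradDot_self]
  exact Finset.sum_mul_sq_le_sq_mul_sq _ _ _

lemma gradDot_add_left (hf : DifferentiableAt ℝ f z) (hg : DifferentiableAt ℝ g z) :
    gradDot (fun z => f z + g z) h z = gradDot f h z + gradDot g h z := by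
  simp only [gradDot, dirDeriv_add hf hg, add_mul, Finset.sum_add_distrib]

lemma gradDot_sub_left (hf : DifferentiableAt ℝ f z) (hg : DifferentiableAt ℝ g z) :
    gradDot (fun z => f z - g z) h z = gradDot f h z - gradDot g h z := by
  simp only [gradDot, dirDeriv_sub hf hg, sub_mul, Finset.sum_sub_distrib]

lemma gradDot_const_mul_left (c : ℝ) (hf : DifferentiableAt ℝ f z) :
    gradDot (fun z => c * f z) h z = c * gradDot f h z := by
  simp only [gradDot, dirDeriv_const_mul c hf, mul_assoc, Finset.mul_sum]

lemma gradDot_mul_left (hf : DifferentiableAt ℝ f z) (hg : DifferentiableAt ℝ g z) :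
    gradDot (fun z => f z * g z) h z = f z * gradDot g h z + g z * gradDot f h z := by
  simp only [gradDot, dirDeriv_mul hf hg, add_mul, mul_assoc, Finset.sum_add_distrib,
    Finset.mul_sum]

lemma gradDot_comp_left {φ : ℝ → ℝ} {φ' : ℝ} (hφ : HasDerivAt φ φ' (f z))
    (hf : DifferentiableAt ℝ f z) :
    gradDot (fun z => φ (f z)) h z = φ' * gradDot f h z := by
  simp only [gradDot, dirDeriv_comp hφ hf, mul_assoc, Finset.mul_sum]

lemma gradDot_congr_left (hfg : f =ᶠ[𝓝 z] g) : gradDot f h z = gradDot g h z := by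
  simp only [gradDot, dirDeriv_congr hfg]

lemma gradDot_congr_right (hfg : f =ᶠ[𝓝 z] g) : gradDot h f z = gradDot h g z := by
  simp only [gradDot, dirDeriv_congr hfg]

lemma lap_congr (hfg : f =ᶠ[𝓝 z] g) : lap f z = lap g z := by
  simp only [lap, dirDeriv_congr (dirDeriv_eventuallyEq hfg _)]

lemma hessForm_congr (hfg : f =ᶠ[𝓝 z] g) : hessForm f z = hessForm g z := by
  ext; simp only [hessForm, dirDeriv_congr (dirDeriv_eventuallyEq hfg _)]

lemma backwardHeat_congr (hfg : f =ᶠ[𝓝 z] g) : backwardHeat f z = backwardHeat g z := by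
  simp only [backwardHeat, dirDeriv_congr hfg, lap_congr hfg]

@[fun_prop]
lemma contDiff_gradDot (hf : ContDiff ℝ ∞ f) (hg : ContDiff ℝ ∞ g) :
    ContDiff ℝ ∞ (gradDot f g) := by
  unfold gradDot; fun_prop

@[fun_prop]
lemma contDiff_lap (hf : ContDiff ℝ ∞ f) : ContDiff ℝ ∞ (lap f) := by
  unfold lap; fun_prop

@[fun_prop]
lemma contDiff_backwardHeat (hf : ContDiff ℝ ∞ f) : ContDiff ℝ ∞ (backwardHeat f) := by
  unfold backwardHeat; fun_prop

lemma lap_add (hf : ContDiffAt ℝ 2 f z) (hg : ContDiffAt ℝ 2 g z) :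
    lap (fun z => f z + g z) z = lap f z + lap g z := by
  simp only [lap, dirDeriv_dirDeriv_add hf hg, Finset.sum_add_distrib]

lemma lap_mul (hf : ContDiffAt ℝ 2 f z) (hg : ContDiffAt ℝ 2 g z) :
    lap (fun z => f z * g z) z = f z * lap g z + 2 * gradDot f g z + g z * lap f z := by
  simp only [lap, gradDot, dirDeriv_dirDeriv_mul hf hg, Finset.mul_sum, ← Finset.sum_add_distrib]
  exact Finset.sum_congr rfl fun _ _ => by ring

lemma lap_comp {φ φ' : ℝ → ℝ} {φ'' : ℝ} (hφ : ∀ᶠ y in 𝓝 (f z), HasDerivAt φ (φ' y) y)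
    (hφ' : HasDerivAt φ' φ'' (f z)) (hf : ContDiffAt ℝ 2 f z) :
    lap (fun z => φ (f z)) z = φ'' * gradDot f f z + φ' (f z) * lap f z := by
  simp only [lap, gradDot, dirDeriv_dirDeriv_comp hφ hφ' hf, Finset.mul_sum,
    Finset.sum_add_distrib]

lemma hessForm_add (hf : ContDiffAt ℝ 2 f z) (hg : ContDiffAt ℝ 2 g z) (ξ : Fin d → ℝ) :
    hessForm (fun z => f z + g z) z ξ = hessForm f z ξ + hessForm g z ξ := by
  simp only [hessForm, dirDeriv_dirDeriv_add hf hg, add_mul, Finset.sum_add_distrib]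

lemma hessForm_comp {φ φ' : ℝ → ℝ} {φ'' : ℝ} (hφ : ∀ᶠ y in 𝓝 (f z), HasDerivAt φ (φ' y) y)
    (hφ' : HasDerivAt φ' φ'' (f z)) (hf : ContDiffAt ℝ 2 f z) (ξ : Fin d → ℝ) :
    hessForm (fun z => φ (f z)) z ξ =
      φ'' * (∑ i, ∂[i] f z * ξ i) ^ 2 + φ' (f z) * hessForm f z ξ := by
  rw [sq, Finset.sum_mul_sum]
  simp only [hessForm, dirDeriv_dirDeriv_comp hφ hφ' hf, Finset.mul_sum, ← Finset.sum_add_distrib]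
  exact Finset.sum_congr rfl fun _ _ => Finset.sum_congr rfl fun _ _ => by ring

lemma backwardHeat_add (hf : ContDiffAt ℝ 2 f z) (hg : ContDiffAt ℝ 2 g z) :
    backwardHeat (fun z => f z + g z) z = backwardHeat f z + backwardHeat g z := by
  simp only [backwardHeat, lap_add hf hg,
    dirDeriv_add (hf.differentiableAt (by simp)) (hg.differentiableAt (by simp))]
  ring

lemma backwardHeat_mul (hf : ContDiffAt ℝ 2 f z) (hg : ContDiffAt ℝ 2 g z) :
    backwardHeat (fun z => f z * g z) z =
      f z * backwardHeat g z + 2 * gradDot f g z + g z * backwardHeat f z := by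
  simp only [backwardHeat, lap_mul hf hg,
    dirDeriv_mul (hf.differentiableAt (by simp)) (hg.differentiableAt (by simp))]
  ring

section Carleman

/-- The zeroth-order coefficient `F = ∂ₜg - Δg - |∇g|²` attached to the weight `e^g`. -/
def carlemanPotential (g : Spacetime d → ℝ) (z : Spacetime d) : ℝ :=
  ∂ₜ g z - lap g z - gradDot g g z

/-- The energy density `e^g (|∇u|² + F u² / 2)` whose time derivative drives the Carleman
inequality. -/
def carlemanEnergy (g u : Spacetime d → ℝ) (z : Spacetime d) : ℝ :=
  exp (g z) * (gradDot u u z + 1 / 2 * (carlemanPotential g z * u z ^ 2))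

/-- The integrand `e^g (LF u² / 2 + 2 D²g(∇u, ∇u) - |Lu|² / 2)` of the Carleman inequality. -/
def carlemanDensity (g u : Spacetime d → ℝ) (z : Spacetime d) : ℝ :=
  exp (g z) * (1 / 2 * (backwardHeat (carlemanPotential g) z * u z ^ 2)
    + 2 * hessForm g z (fun i => ∂[i] u z) - 1 / 2 * backwardHeat u z ^ 2)

/-- The multiplier `M` for which `∇·(M ∇u)` is the principal divergence term of the Carleman
identity. -/
def carlemanMultiplier (g u : Spacetime d → ℝ) (z : Spacetime d) : ℝ :=
  exp (g z) * (2 * ∂ₜ u z - 2 * gradDot g u z + carlemanPotential g z * u z)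

variable {u : Spacetime d → ℝ}

@[fun_prop]
lemma contDiff_carlemanPotential (hg : ContDiff ℝ ∞ g) : ContDiff ℝ ∞ (carlemanPotential g) := by
  unfold carlemanPotential; fun_prop

@[fun_prop]
lemma contDiff_carlemanEnergy (hg : ContDiff ℝ ∞ g) (hu : ContDiff ℝ ∞ u) :
    ContDiff ℝ ∞ (carlemanEnergy g u) := by
  unfold carlemanEnergy; fun_prop

@[fun_prop]
lemma contDiff_carlemanMultiplier (hg : ContDiff ℝ ∞ g) (hu : ContDiff ℝ ∞ u) :
    ContDiff ℝ ∞ (carlemanMultiplier g u) := by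
  unfold carlemanMultiplier; fun_prop

lemma contDiff_carlemanDensity (hg : ContDiff ℝ ∞ g) (hu : ContDiff ℝ ∞ u) :
    ContDiff ℝ ∞ (carlemanDensity g u) := by
  unfold carlemanDensity hessForm; fun_prop

lemma dirDeriv_gradDot (v : Spacetime d) (hf : ContDiff ℝ ∞ f) (hg : ContDiff ℝ ∞ g)
    (z : Spacetime d) :
    dirDeriv v (gradDot f g) z =
      gradDot f (dirDeriv v g) z + gradDot (dirDeriv v f) g z := by
  have hcomm {f : Spacetime d → ℝ} (hf : ContDiff ℝ ∞ f) (i : Fin d) :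
      dirDeriv v (∂[i] f) z = ∂[i] (dirDeriv v f) z :=
    dirDeriv_comm (hf.contDiffAt.of_le (by norm_cast)) _ _
  change dirDeriv v (fun z => ∑ i, ∂[i] f z * ∂[i] g z) z = _
  rw [dirDeriv_sum _ (by fun_prop)]
  simp only [gradDot, ← Finset.sum_add_distrib]
  refine Finset.sum_congr rfl fun i _ => ?_
  rw [dirDeriv_mul (by fun_prop) (by fun_prop), hcomm hf, hcomm hg]
  ring

lemma dt_gradDot_self (hu : ContDiff ℝ ∞ u) (z : Spacetime d) :
    ∂ₜ (gradDot u u) z = 2 * gradDot (∂ₜ u) u z := by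
  rw [dirDeriv_gradDot _ hu hu, gradDot_comm]
  ring

/-- The Hessian as an iterated carré du champ, which is what the commutator in the Carleman
identity produces. -/
lemma two_mul_hessForm_grad (hg : ContDiff ℝ ∞ g) (hu : ContDiff ℝ ∞ u) (z : Spacetime d) :
    2 * hessForm g z (fun i => ∂[i] u z) =
      2 * gradDot (gradDot g u) u z - gradDot (gradDot u u) g z := by
  have hswap : ∑ i, gradDot g (∂[i] u) z * ∂[i] u z = ∑ i, gradDot u (∂[i] u) z * ∂[i] g z := by
    simp only [gradDot, Finset.sum_mul]
    rw [Finset.sum_comm]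
    refine Finset.sum_congr rfl fun i _ => Finset.sum_congr rfl fun j _ => ?_
    rw [dirDeriv_comm (hu.contDiffAt.of_le (by norm_cast))]
    ring
  have hhess : hessForm g z (fun i => ∂[i] u z) = ∑ i, gradDot (∂[i] g) u z * ∂[i] u z := by
    simp only [hessForm, gradDot, Finset.sum_mul]
    refine Finset.sum_congr rfl fun i _ => Finset.sum_congr rfl fun j _ => ?_
    rw [dirDeriv_comm (hg.contDiffAt.of_le (by norm_cast))]
    ring
  have hgu : gradDot (gradDot g u) u z =
      ∑ i, gradDot u (∂[i] u) z * ∂[i] g z + hessForm g z (fun i => ∂[i] u z) := by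
    rw [← hswap, hhess, gradDot]
    simp only [dirDeriv_gradDot _ hg hu, add_mul, Finset.sum_add_distrib]
  have huu : gradDot (gradDot u u) g z = 2 * ∑ i, gradDot u (∂[i] u) z * ∂[i] g z := by
    rw [gradDot, Finset.mul_sum]
    refine Finset.sum_congr rfl fun i _ => ?_
    rw [dirDeriv_gradDot _ hu hu, gradDot_comm (∂[i] u)]
    ring
  rw [hgu, huu]
  ring

lemma dirDeriv_sq (hf : DifferentiableAt ℝ f z) (v : Spacetime d) :
    dirDeriv v (fun z => f z ^ 2) z = 2 * f z * dirDeriv v f z := by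
  simpa using dirDeriv_comp (hasDerivAt_pow 2 (f z)) hf v

lemma gradDot_sq_left (hf : DifferentiableAt ℝ f z) :
    gradDot (fun z => f z ^ 2) h z = 2 * f z * gradDot f h z := by
  simpa using gradDot_comp_left (hasDerivAt_pow 2 (f z)) hf

lemma dt_carlemanEnergy (hg : ContDiff ℝ ∞ g) (hu : ContDiff ℝ ∞ u) (z : Spacetime d) :
    ∂ₜ (carlemanEnergy g u) z = exp (g z) *
      (∂ₜ g z * (gradDot u u z + 1 / 2 * (carlemanPotential g z * u z ^ 2))
        + 2 * gradDot (∂ₜ u) u z + 1 / 2 * (∂ₜ (carlemanPotential g) z * u z ^ 2)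
        + carlemanPotential g z * u z * ∂ₜ u z) := by
  unfold carlemanEnergy
  rw [dirDeriv_mul (by fun_prop) (by fun_prop),
    dirDeriv_comp (Real.hasDerivAt_exp (g z)) (by fun_prop),
    dirDeriv_add (by fun_prop) (by fun_prop), dirDeriv_const_mul _ (by fun_prop),
    dirDeriv_mul (by fun_prop) (by fun_prop), dirDeriv_sq (by fun_prop), dt_gradDot_self hu]
  ring

lemma gradDot_carlemanEnergy_left (hg : ContDiff ℝ ∞ g) (hu : ContDiff ℝ ∞ u)
    (z : Spacetime d) :
    gradDot (carlemanEnergy g u) h z = exp (g z) *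
      ((gradDot u u z + 1 / 2 * (carlemanPotential g z * u z ^ 2)) * gradDot g h z
        + gradDot (gradDot u u) h z + 1 / 2 * (u z ^ 2 * gradDot (carlemanPotential g) h z)
        + carlemanPotential g z * u z * gradDot u h z) := by
  unfold carlemanEnergy
  rw [gradDot_mul_left (by fun_prop) (by fun_prop),
    gradDot_comp_left (Real.hasDerivAt_exp (g z)) (by fun_prop),
    gradDot_add_left (by fun_prop) (by fun_prop), gradDot_const_mul_left _ (by fun_prop),
    gradDot_mul_left (by fun_prop) (by fun_prop), gradDot_sq_left (by fun_prop)]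
  ring

lemma gradDot_carlemanMultiplier_left (hg : ContDiff ℝ ∞ g) (hu : ContDiff ℝ ∞ u)
    (z : Spacetime d) :
    gradDot (carlemanMultiplier g u) h z = exp (g z) *
      ((2 * ∂ₜ u z - 2 * gradDot g u z + carlemanPotential g z * u z) * gradDot g h z
        + 2 * gradDot (∂ₜ u) h z - 2 * gradDot (gradDot g u) h z
        + carlemanPotential g z * gradDot u h z
        + u z * gradDot (carlemanPotential g) h z) := by
  unfold carlemanMultiplier
  rw [gradDot_mul_left (by fun_prop) (by fun_prop),
    gradDot_comp_left (Real.hasDerivAt_exp (g z)) (by fun_prop),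
    gradDot_add_left (by fun_prop) (by fun_prop), gradDot_sub_left (by fun_prop) (by fun_prop),
    gradDot_const_mul_left _ (by fun_prop), gradDot_const_mul_left _ (by fun_prop),
    gradDot_mul_left (by fun_prop) (by fun_prop)]
  ring

/-- Modulo divergences, `∂ₜE` consists of the commutator terms and a quadratic polynomial in
`A = Δu + ∇g·∇u - F u / 2`, the symmetric part of the conjugated operator. -/
lemma carleman_identity (hg : ContDiff ℝ ∞ g) (hu : ContDiff ℝ ∞ u) (z : Spacetime d)
    {F : Spacetime d → ℝ} (hF : F = carlemanPotential g)
    {A : ℝ} (hA : A = lap u z + gradDot g u z - 1 / 2 * (F z * u z)) :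
    ∂ₜ (carlemanEnergy g u) z - divGrad (carlemanMultiplier g u) u z
        - divGrad (carlemanEnergy g u) g z
        - divGrad (fun z => exp (g z) * (-(1 / 2) * u z ^ 2)) F z =
      exp (g z) * (2 * A ^ 2 - 2 * A * backwardHeat u z
        + 1 / 2 * (backwardHeat F z * u z ^ 2) + 2 * hessForm g z (fun i => ∂[i] u z)) := by
  have h_dtg : ∂ₜ g z = F z + lap g z + gradDot g g z := by
    rw [hF, carlemanPotential]; ring
  have h_weight : gradDot (fun z => exp (g z) * (-(1 / 2) * u z ^ 2)) F z =
      exp (g z) * (-(1 / 2) * u z ^ 2 * gradDot g F z - u z * gradDot u F z) := by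
    rw [gradDot_mul_left (by fun_prop) (by fun_prop), gradDot_const_mul_left _ (by fun_prop),
      gradDot_comp_left (Real.hasDerivAt_exp (g z)) (by fun_prop), gradDot_sq_left (by fun_prop)]
    ring
  simp only [divGrad, dt_carlemanEnergy hg hu, gradDot_carlemanMultiplier_left hg hu,
    gradDot_carlemanEnergy_left hg hu, h_weight, two_mul_hessForm_grad hg hu, ← hF]
  rw [h_dtg, hA, carlemanEnergy, carlemanMultiplier, backwardHeat, backwardHeat, ← hF,
    gradDot_comm u g, gradDot_comm F u, gradDot_comm F g]
  ring

lemma carlemanDensity_le (hg : ContDiff ℝ ∞ g) (hu : ContDiff ℝ ∞ u) (z : Spacetime d) :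
    carlemanDensity g u z ≤
      ∂ₜ (carlemanEnergy g u) z - divGrad (carlemanMultiplier g u) u z
        - divGrad (carlemanEnergy g u) g z
        - divGrad (fun z => exp (g z) * (-(1 / 2) * u z ^ 2)) (carlemanPotential g) z := by
  rw [carleman_identity hg hu z rfl rfl, carlemanDensity]
  refine mul_le_mul_of_nonneg_left ?_ (exp_pos _).le
  set A := lap u z + gradDot g u z - 1 / 2 * (carlemanPotential g z * u z)
  linarith [sq_nonneg (2 * A - backwardHeat u z)]

section Integration

lemma hasCompactSupport_slice (hf : HasCompactSupport f) (t : ℝ) :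
    HasCompactSupport fun x => f (t, x) :=
  HasCompactSupport.intro (hf.image continuous_snd) fun x hx => by
    by_contra hne
    exact hx ⟨(t, x), subset_tsupport f hne, rfl⟩

lemma integrable_slice (hf : Continuous f) (hfc : HasCompactSupport f) (t : ℝ) :
    Integrable fun x => f (t, x) :=
  (hf.comp (by fun_prop)).integrable_of_hasCompactSupport (hasCompactSupport_slice hfc t)

lemma hasFDerivAt_slice (hf : DifferentiableAt ℝ f z) :
    HasFDerivAt (fun x => f (z.1, x))
      ((fderiv ℝ f z).comp (ContinuousLinearMap.inr ℝ ℝ (EuclideanSpace ℝ (Fin d)))) z.2 :=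
  HasFDerivAt.comp z.2 hf.hasFDerivAt (hasFDerivAt_prodMk_right z.1 z.2)

lemma hasDerivAt_slice (hf : DifferentiableAt ℝ f z) :
    HasDerivAt (fun t => f (t, z.2)) (∂ₜ f z) z.1 := by
  have h := (HasFDerivAt.comp z.1 hf.hasFDerivAt (hasFDerivAt_prodMk_left z.1 z.2)).hasDerivAt
  simpa [dirDeriv, Function.comp_def] using h

lemma pdg_slice (hf : DifferentiableAt ℝ f z) (i : Fin d) :
    pdg i (fun x => f (z.1, x)) z.2 = ∂[i] f z := by
  rw [pdg, (hasFDerivAt_slice hf).fderiv]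
  simp [dirDeriv]

lemma integral_slice_dx (hf : ContDiff ℝ ∞ f) (hfc : HasCompactSupport f) (i : Fin d) (t : ℝ) :
    ∫ x, ∂[i] f (t, x) = 0 := by
  have hderiv (x : EuclideanSpace ℝ (Fin d)) :
      fderiv ℝ (fun y => f (t, y)) x (EuclideanSpace.single i 1) = ∂[i] f (t, x) :=
    pdg_slice (z := (t, x)) (by fun_prop) i
  have hint : Integrable fun x => ∂[i] f (t, x) :=
    integrable_slice (contDiff_dirDeriv _ hf).continuous (hfc.fderiv_apply ℝ _) t
  have hparts := integral_mul_fderiv_eq_neg_fderiv_mul_of_integrable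
    (μ := (volume : Measure (EuclideanSpace ℝ (Fin d))))
    (f := fun _ => (1 : ℝ)) (g := fun y => f (t, y)) (v := EuclideanSpace.single i 1)
    (by simp) (by simpa [hderiv] using hint)
    (by simpa using integrable_slice hf.continuous hfc t)
    (fun _ _ => by fun_prop)
    (fun x _ => (hasFDerivAt_slice (z := (t, x)) (by fun_prop)).differentiableAt)
  simpa [hderiv] using hparts

lemma divGrad_eq_sum {φ : Spacetime d → ℝ} (hφ : ContDiff ℝ ∞ φ) (hf : ContDiff ℝ ∞ f)
    (z : Spacetime d) : divGrad φ f z = ∑ i, ∂[i] (fun z => φ z * ∂[i] f z) z := by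
  simp only [divGrad, gradDot, lap, Finset.mul_sum, ← Finset.sum_add_distrib]
  refine Finset.sum_congr rfl fun i _ => ?_
  rw [dirDeriv_mul (by fun_prop) (by fun_prop)]
  ring

lemma integrable_dirDeriv (hf : ContDiff ℝ ∞ f) (hfc : HasCompactSupport f) (v : Spacetime d) :
    Integrable (dirDeriv v f) :=
  (contDiff_dirDeriv v hf).continuous.integrable_of_hasCompactSupport (hfc.fderiv_apply ℝ v)

lemma integrable_divGrad {φ : Spacetime d → ℝ} (hφ : ContDiff ℝ ∞ φ)
    (hφc : HasCompactSupport φ) (hf : ContDiff ℝ ∞ f) : Integrable (divGrad φ f) := by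
  rw [funext (divGrad_eq_sum hφ hf)]
  have hflux (i : Fin d) : ContDiff ℝ ∞ fun z => φ z * ∂[i] f z := by fun_prop
  exact integrable_finsetSum _ fun i _ => integrable_dirDeriv (hflux i) hφc.mul_right _

lemma setIntegral_divGrad {φ : Spacetime d → ℝ} (hφ : ContDiff ℝ ∞ φ)
    (hφc : HasCompactSupport φ) (hf : ContDiff ℝ ∞ f) (I : Set ℝ) :
    ∫ z in I ×ˢ univ, divGrad φ f z = 0 := by
  have hflux (i : Fin d) : ContDiff ℝ ∞ fun z => φ z * ∂[i] f z := by fun_prop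
  have hint (i : Fin d) :=
    integrable_dirDeriv (hflux i) hφc.mul_right (0, EuclideanSpace.single i 1)
  simp only [divGrad_eq_sum hφ hf]
  rw [integral_finsetSum _ fun i _ => (hint i).integrableOn]
  refine Finset.sum_eq_zero fun i _ => ?_
  rw [Measure.volume_eq_prod, setIntegral_prod _ (by exact (hint i).integrableOn)]
  simp [integral_slice_dx (hflux i) hφc.mul_right]

lemma setIntegral_sub_divGrad {Φ φ : Spacetime d → ℝ} (hΦ : Integrable Φ)
    (hφ : ContDiff ℝ ∞ φ) (hφc : HasCompactSupport φ) (hf : ContDiff ℝ ∞ f) (I : Set ℝ) :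
    ∫ z in I ×ˢ univ, (Φ z - divGrad φ f z) = ∫ z in I ×ˢ univ, Φ z := by
  rw [integral_sub hΦ.integrableOn (integrable_divGrad hφ hφc hf).integrableOn,
    setIntegral_divGrad hφ hφc hf, sub_zero]

lemma setIntegral_dt (hf : ContDiff ℝ ∞ f) (hfc : HasCompactSupport f) {a b : ℝ} (hab : a ≤ b) :
    ∫ z in Icc a b ×ˢ univ, ∂ₜ f z = (∫ x, f (b, x)) - ∫ x, f (a, x) := by
  have hint : Integrable (∂ₜ f) ((volume.restrict (Icc a b)).prod volume) := by
    rw [← Measure.restrict_univ (μ := (volume : Measure (EuclideanSpace ℝ (Fin d)))),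
      Measure.prod_restrict]
    exact (integrable_dirDeriv hf hfc _).integrableOn
  rw [Measure.volume_eq_prod, ← Measure.prod_restrict, Measure.restrict_univ,
    integral_prod_symm _ hint, ← integral_sub (integrable_slice hf.continuous hfc b)
      (integrable_slice hf.continuous hfc a)]
  congr with x
  rw [integral_Icc_eq_integral_Ioc, ← intervalIntegral.integral_of_le hab]
  refine intervalIntegral.integral_eq_sub_of_hasDerivAt (f := fun t => f (t, x))
    (fun t _ => hasDerivAt_slice (z := (t, x)) (by fun_prop)) ?_
  exact ((contDiff_dirDeriv _ hf).continuous.comp (by fun_prop)).intervalIntegrable _ _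

end Integration

lemma eq_zero_of_notMem_tsupport {z : Spacetime d} (hz : z ∉ tsupport u) :
    u z = 0 ∧ (∀ v, dirDeriv v u z = 0) ∧ ∀ h, gradDot h u z = 0 := by
  have h_zero : u =ᶠ[𝓝 z] fun _ => 0 := notMem_tsupport_iff_eventuallyEq.mp hz
  have h_deriv (v : Spacetime d) : dirDeriv v u z = 0 := by
    rw [dirDeriv_congr h_zero, dirDeriv_const]; rfl
  exact ⟨h_zero.eq_of_nhds, h_deriv, fun h => by simp [gradDot, h_deriv]⟩

lemma carlemanEnergy_eq_zero {z : Spacetime d} (hz : z ∉ tsupport u) :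
    carlemanEnergy g u z = 0 := by
  obtain ⟨h₀, -, h_grad⟩ := eq_zero_of_notMem_tsupport hz
  simp [carlemanEnergy, h₀, h_grad]

lemma carlemanMultiplier_eq_zero {z : Spacetime d} (hz : z ∉ tsupport u) :
    carlemanMultiplier g u z = 0 := by
  obtain ⟨h₀, h_deriv, h_grad⟩ := eq_zero_of_notMem_tsupport hz
  simp [carlemanMultiplier, h₀, h_deriv, h_grad]

lemma carlemanDensity_eq_zero {z : Spacetime d} (hz : z ∉ tsupport u) :
    carlemanDensity g u z = 0 := by
  obtain ⟨h₀, h_deriv, -⟩ := eq_zero_of_notMem_tsupport hz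
  have h_heat : backwardHeat u z = 0 := by
    rw [backwardHeat_congr (notMem_tsupport_iff_eventuallyEq.mp hz)]
    have : (0 : Spacetime d → ℝ) = fun _ => 0 := rfl
    simp [backwardHeat, lap, this, dirDeriv_const]
  simp [carlemanDensity, hessForm, h₀, h_deriv, h_heat]

lemma hasCompactSupport_carlemanEnergy (hu : HasCompactSupport u) :
    HasCompactSupport (carlemanEnergy g u) :=
  HasCompactSupport.intro hu fun _ => carlemanEnergy_eq_zero

lemma hasCompactSupport_carlemanMultiplier (hu : HasCompactSupport u) :
    HasCompactSupport (carlemanMultiplier g u) :=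
  HasCompactSupport.intro hu fun _ => carlemanMultiplier_eq_zero

lemma hasCompactSupport_carlemanDensity (hu : HasCompactSupport u) :
    HasCompactSupport (carlemanDensity g u) :=
  HasCompactSupport.intro hu fun _ => carlemanDensity_eq_zero

theorem carleman_inequality (hg : ContDiff ℝ ∞ g) (hu : ContDiff ℝ ∞ u)
    (huc : HasCompactSupport u) {a b : ℝ} (hab : a ≤ b) :
    ∫ z in Icc a b ×ˢ univ, carlemanDensity g u z ≤
      (∫ x, carlemanEnergy g u (b, x)) - ∫ x, carlemanEnergy g u (a, x) := by
  have hF := contDiff_carlemanPotential hg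
  have hI : Integrable (carlemanDensity g u) :=
    (contDiff_carlemanDensity hg hu).continuous.integrable_of_hasCompactSupport
      (hasCompactSupport_carlemanDensity huc)
  have hE := contDiff_carlemanEnergy hg hu
  have hEc : HasCompactSupport (carlemanEnergy g u) := hasCompactSupport_carlemanEnergy huc
  have hM := contDiff_carlemanMultiplier hg hu
  have hMc : HasCompactSupport (carlemanMultiplier g u) := hasCompactSupport_carlemanMultiplier huc
  have hW : ContDiff ℝ ∞ fun z => exp (g z) * (-(1 / 2) * u z ^ 2) := by fun_prop
  have hWc : HasCompactSupport fun z => exp (g z) * (-(1 / 2) * u z ^ 2) :=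
    (huc.comp_left (g := fun y => -(1 / 2) * y ^ 2) (by simp)).mul_left
  have h_dt := integrable_dirDeriv hE hEc (1, 0)
  have h_dtM := h_dt.sub (integrable_divGrad hM hMc hu)
  have h_dtME := h_dtM.sub (integrable_divGrad hE hEc hg)
  have h_all := h_dtME.sub (integrable_divGrad hW hWc hF)
  calc ∫ z in Icc a b ×ˢ univ, carlemanDensity g u z
    _ ≤ ∫ z in Icc a b ×ˢ univ, (∂ₜ (carlemanEnergy g u) z
          - divGrad (carlemanMultiplier g u) u z - divGrad (carlemanEnergy g u) g z
          - divGrad (fun z => exp (g z) * (-(1 / 2) * u z ^ 2)) (carlemanPotential g) z) :=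
        integral_mono hI.integrableOn h_all.integrableOn (carlemanDensity_le hg hu)
    _ = ∫ z in Icc a b ×ˢ univ, ∂ₜ (carlemanEnergy g u) z :=
        (setIntegral_sub_divGrad h_dtME hW hWc hF _).trans <|
          (setIntegral_sub_divGrad h_dtM hE hEc hg _).trans <|
            setIntegral_sub_divGrad h_dt hM hMc hu _
    _ = _ := setIntegral_dt hE hEc hab

end Carleman

end GammaCalculus

section AxialRadius

variable {d : ℕ} {S : Finset (Fin d)} {f : Spacetime d → ℝ} {z : Spacetime d}

/-- The squared distance `∑_{i ∈ S} xᵢ²` to the subspace orthogonal to the coordinates in `S`. -/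
def axialSq (S : Finset (Fin d)) (x : EuclideanSpace ℝ (Fin d)) : ℝ :=
  ∑ i ∈ S, x i ^ 2

/-- The axial radius `√(∑_{i ∈ S} xᵢ²)`: for `S` the first `d₁` coordinates it is the `r` of the
cylindrical shell, for the complement of `S` it is `|z|`. -/
def axialRadius (S : Finset (Fin d)) (x : EuclideanSpace ℝ (Fin d)) : ℝ :=
  √(axialSq S x)

@[fun_prop]
lemma contDiff_axialSq (S : Finset (Fin d)) {n : WithTop ℕ∞} : ContDiff ℝ n (axialSq S) := by
  unfold axialSq; fun_prop

lemma axialSq_nonneg (S : Finset (Fin d)) (x : EuclideanSpace ℝ (Fin d)) : 0 ≤ axialSq S x :=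
  Finset.sum_nonneg fun _ _ => sq_nonneg _

lemma axialRadius_sq (S : Finset (Fin d)) (x : EuclideanSpace ℝ (Fin d)) :
    axialRadius S x ^ 2 = axialSq S x :=
  Real.sq_sqrt (axialSq_nonneg S x)

lemma dirDeriv_coord (v z : Spacetime d) (i : Fin d) :
    dirDeriv v (fun z => z.2 i) z = v.2 i := by
  have h : HasFDerivAt (fun z : Spacetime d => z.2 i)
      ((EuclideanSpace.proj i).comp (ContinuousLinearMap.snd ℝ ℝ _)) z :=
    ((EuclideanSpace.proj i).comp (ContinuousLinearMap.snd ℝ ℝ _)).hasFDerivAt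
  simp [dirDeriv, h.fderiv]

lemma dirDeriv_axialSq (S : Finset (Fin d)) (v : Spacetime d) :
    dirDeriv v (fun z => axialSq S z.2) = fun z => ∑ i ∈ S, 2 * v.2 i * z.2 i := by
  ext z
  unfold axialSq
  rw [dirDeriv_sum _ (by fun_prop)]
  refine Finset.sum_congr rfl fun i _ => ?_
  rw [dirDeriv_sq (by fun_prop), dirDeriv_coord]
  ring

lemma dirDeriv_dirDeriv_axialSq (S : Finset (Fin d)) (v w z : Spacetime d) :
    dirDeriv v (dirDeriv w fun z => axialSq S z.2) z = ∑ i ∈ S, 2 * w.2 i * v.2 i := by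
  rw [dirDeriv_axialSq, dirDeriv_sum _ (by fun_prop)]
  refine Finset.sum_congr rfl fun i _ => ?_
  rw [dirDeriv_const_mul _ (by fun_prop), dirDeriv_coord]

lemma dt_axialSq (S : Finset (Fin d)) (z : Spacetime d) : ∂ₜ (fun z => axialSq S z.2) z = 0 := by
  simp [dirDeriv_axialSq]

lemma dx_axialSq (S : Finset (Fin d)) (i : Fin d) (z : Spacetime d) :
    ∂[i] (fun z => axialSq S z.2) z = if i ∈ S then 2 * z.2 i else 0 := by
  simp [dirDeriv_axialSq]

lemma gradDot_axialSq (S R : Finset (Fin d)) (z : Spacetime d) :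
    gradDot (fun z => axialSq S z.2) (fun z => axialSq R z.2) z = 4 * axialSq (S ∩ R) z.2 := by
  simp only [gradDot, dx_axialSq, ite_mul, mul_ite, zero_mul, mul_zero, Finset.sum_ite_mem,
    Finset.univ_inter]
  rw [Finset.inter_comm, axialSq, Finset.mul_sum]
  exact Finset.sum_congr rfl fun _ _ => by ring

lemma lap_axialSq (S : Finset (Fin d)) (z : Spacetime d) :
    lap (fun z => axialSq S z.2) z = 2 * S.card := by
  simp [lap, dirDeriv_dirDeriv_axialSq, mul_comm]

lemma hessForm_axialSq (S : Finset (Fin d)) (z : Spacetime d) (ξ : Fin d → ℝ) :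
    hessForm (fun z => axialSq S z.2) z ξ = 2 * ∑ i ∈ S, ξ i ^ 2 := by
  simp [hessForm, dirDeriv_dirDeriv_axialSq, Finset.mul_sum, sq]

lemma contDiffAt_axialRadius (hz : 0 < axialSq S z.2) :
    ContDiffAt ℝ 2 (fun z : Spacetime d => axialRadius S z.2) z :=
  (Real.contDiffAt_sqrt hz.ne').comp z (by fun_prop)

lemma axialRadius_pos {x : EuclideanSpace ℝ (Fin d)} (hx : 0 < axialSq S x) :
    0 < axialRadius S x :=
  Real.sqrt_pos.2 hx

lemma dt_axialRadius (hz : 0 < axialSq S z.2) : ∂ₜ (fun z => axialRadius S z.2) z = 0 := by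
  unfold axialRadius
  rw [dirDeriv_comp (f := fun z : Spacetime d => axialSq S z.2) (Real.hasDerivAt_sqrt hz.ne')
    (by fun_prop), dt_axialSq, mul_zero]

lemma gradDot_axialRadius_left (hz : 0 < axialSq S z.2) :
    gradDot (fun z => axialRadius S z.2) f z =
      (2 * axialRadius S z.2)⁻¹ * gradDot (fun z => axialSq S z.2) f z := by
  unfold axialRadius
  rw [gradDot_comp_left (f := fun z : Spacetime d => axialSq S z.2) (Real.hasDerivAt_sqrt hz.ne')
    (by fun_prop), one_div]

lemma gradDot_axialRadius_axialSq_univ (hz : 0 < axialSq S z.2) :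
    gradDot (fun z => axialRadius S z.2) (fun z => axialSq Finset.univ z.2) z =
      2 * axialRadius S z.2 := by
  have hr := axialRadius_pos hz
  rw [gradDot_axialRadius_left hz, gradDot_axialSq, Finset.inter_univ, ← axialRadius_sq]
  field_simp
  norm_num

lemma gradDot_axialRadius_self (hz : 0 < axialSq S z.2) :
    gradDot (fun z => axialRadius S z.2) (fun z => axialRadius S z.2) z = 1 := by
  have hr := axialRadius_pos hz
  rw [gradDot_axialRadius_left hz, gradDot_comm, gradDot_axialRadius_left hz, gradDot_axialSq,
    Finset.inter_self, ← axialRadius_sq]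
  field_simp
  norm_num

lemma hasDerivAt_sqrt_deriv {y : ℝ} (hy : 0 < y) :
    HasDerivAt (fun y => 1 / (2 * √y)) (-(4 * √y ^ 3)⁻¹) y := by
  have hs : √y ≠ 0 := (Real.sqrt_pos.2 hy).ne'
  simp only [one_div]
  refine (((Real.hasDerivAt_sqrt hy.ne').const_mul 2).fun_inv (by positivity)).congr_deriv ?_
  field_simp
  norm_num

lemma eventually_hasDerivAt_sqrt {y : ℝ} (hy : 0 < y) :
    ∀ᶠ w in 𝓝 y, HasDerivAt (fun w => √w) (1 / (2 * √w)) w :=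
  (eventually_gt_nhds hy).mono fun _ hw => Real.hasDerivAt_sqrt hw.ne'

lemma lap_axialRadius (hz : 0 < axialSq S z.2) :
    lap (fun z => axialRadius S z.2) z = (S.card - 1) * (axialRadius S z.2)⁻¹ := by
  have hr := axialRadius_pos hz
  change lap (fun z => √(axialSq S z.2)) z = _
  rw [lap_comp (eventually_hasDerivAt_sqrt hz) (hasDerivAt_sqrt_deriv hz) (by fun_prop),
    gradDot_axialSq, Finset.inter_self, lap_axialSq]
  change -(4 * axialRadius S z.2 ^ 3)⁻¹ * _ + 1 / (2 * axialRadius S z.2) * _ = _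
  rw [← axialRadius_sq]
  field_simp
  ring

lemma contDiffAt_axialRadius_inv (hz : 0 < axialSq S z.2) :
    ContDiffAt ℝ 2 (fun z : Spacetime d => (axialRadius S z.2)⁻¹) z :=
  (contDiffAt_axialRadius hz).inv (axialRadius_pos hz).ne'

lemma dt_axialRadius_inv (hz : 0 < axialSq S z.2) :
    ∂ₜ (fun z => (axialRadius S z.2)⁻¹) z = 0 := by
  rw [dirDeriv_comp (φ := fun y => y⁻¹) (f := fun z : Spacetime d => axialRadius S z.2)
    (hasDerivAt_inv (axialRadius_pos hz).ne')
    ((contDiffAt_axialRadius hz).differentiableAt (by simp)), dt_axialRadius hz, mul_zero]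

lemma lap_axialRadius_inv (hz : 0 < axialSq S z.2) :
    lap (fun z => (axialRadius S z.2)⁻¹) z = (3 - S.card) * (axialRadius S z.2)⁻¹ ^ 3 := by
  have hr := axialRadius_pos hz
  have hinv : ∀ᶠ y in 𝓝 (axialRadius S z.2), HasDerivAt (fun y => y⁻¹) (-(y ^ 2)⁻¹) y :=
    (eventually_ne_nhds hr.ne').mono fun _ hy => hasDerivAt_inv hy
  have hinv' : HasDerivAt (fun y : ℝ => -(y ^ 2)⁻¹) (2 * (axialRadius S z.2)⁻¹ ^ 3)
      (axialRadius S z.2) := by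
    refine ((hasDerivAt_pow 2 (axialRadius S z.2)).fun_inv (by positivity)).fun_neg.congr_deriv ?_
    field_simp
    norm_num
    ring
  rw [lap_comp hinv hinv' (contDiffAt_axialRadius hz), gradDot_axialRadius_self hz,
    lap_axialRadius hz]
  field_simp
  ring

lemma backwardHeat_axialSq (S : Finset (Fin d)) (z : Spacetime d) :
    backwardHeat (fun z => axialSq S z.2) z = 2 * S.card := by
  rw [backwardHeat, dt_axialSq, lap_axialSq, zero_add]

lemma backwardHeat_axialRadius (hz : 0 < axialSq S z.2) :
    backwardHeat (fun z => axialRadius S z.2) z = (S.card - 1) * (axialRadius S z.2)⁻¹ := by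
  rw [backwardHeat, dt_axialRadius hz, lap_axialRadius hz, zero_add]

lemma backwardHeat_axialRadius_inv (hz : 0 < axialSq S z.2) :
    backwardHeat (fun z => (axialRadius S z.2)⁻¹) z =
      (3 - S.card) * (axialRadius S z.2)⁻¹ ^ 3 := by
  rw [backwardHeat, dt_axialRadius_inv hz, lap_axialRadius_inv hz, zero_add]

lemma hessForm_axialRadius_nonneg (hz : 0 < axialSq S z.2) (ξ : Fin d → ℝ) :
    0 ≤ hessForm (fun z => axialRadius S z.2) z ξ := by
  have hr := axialRadius_pos hz
  have h_radial : ∑ i, ∂[i] (fun z => axialSq S z.2) z * ξ i = 2 * ∑ i ∈ S, z.2 i * ξ i := by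
    simp [dx_axialSq, Finset.mul_sum, mul_assoc]
  have h_cauchy : (∑ i ∈ S, z.2 i * ξ i) ^ 2 ≤ axialRadius S z.2 ^ 2 * ∑ i ∈ S, ξ i ^ 2 := by
    rw [axialRadius_sq]
    exact Finset.sum_mul_sq_le_sq_mul_sq _ _ _
  change 0 ≤ hessForm (fun z => √(axialSq S z.2)) z ξ
  rw [hessForm_comp (eventually_hasDerivAt_sqrt hz) (hasDerivAt_sqrt_deriv hz) (by fun_prop),
    hessForm_axialSq, h_radial]
  change 0 ≤ -(4 * axialRadius S z.2 ^ 3)⁻¹ * _ + 1 / (2 * axialRadius S z.2) * _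
  have h_eq : -(4 * axialRadius S z.2 ^ 3)⁻¹ * (2 * ∑ i ∈ S, z.2 i * ξ i) ^ 2
        + 1 / (2 * axialRadius S z.2) * (2 * ∑ i ∈ S, ξ i ^ 2) =
      (axialRadius S z.2 ^ 2 * ∑ i ∈ S, ξ i ^ 2 - (∑ i ∈ S, z.2 i * ξ i) ^ 2)
        / axialRadius S z.2 ^ 3 := by
    field_simp
    ring
  rw [h_eq]
  exact div_nonneg (sub_nonneg.2 h_cauchy) (by positivity)

end AxialRadius

section TimeMultiplier

variable {d : ℕ} {θ : ℝ → ℝ} {f h : Spacetime d → ℝ} {z : Spacetime d}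

lemma dirDeriv_time (hθ : Differentiable ℝ θ) (v : Spacetime d) :
    dirDeriv v (fun z => θ z.1) = fun z => deriv θ z.1 * v.1 := by
  ext z
  rw [dirDeriv_comp (f := fun z : Spacetime d => z.1) (hθ z.1).hasDerivAt (by fun_prop)]
  simp [dirDeriv, fderiv_fst]

lemma dx_time (hθ : Differentiable ℝ θ) (i : Fin d) :
    ∂[i] (fun z : Spacetime d => θ z.1) = fun _ => 0 := by
  simp [dirDeriv_time hθ]

lemma lap_time (hθ : Differentiable ℝ θ) (z : Spacetime d) : lap (fun z => θ z.1) z = 0 := by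
  simp [lap, dx_time hθ, dirDeriv_const]

lemma gradDot_time_left (hθ : Differentiable ℝ θ) : gradDot (fun z => θ z.1) f z = 0 := by
  simp [gradDot, dx_time hθ]

lemma backwardHeat_time (hθ : Differentiable ℝ θ) (z : Spacetime d) :
    backwardHeat (fun z => θ z.1) z = deriv θ z.1 := by
  simp [backwardHeat, dirDeriv_time hθ, lap_time hθ]

lemma dt_time_mul (hθ : Differentiable ℝ θ) (hf : DifferentiableAt ℝ f z) :
    ∂ₜ (fun z => θ z.1 * f z) z = θ z.1 * ∂ₜ f z + deriv θ z.1 * f z := by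
  rw [dirDeriv_mul (by fun_prop) hf, dirDeriv_time hθ]
  ring

lemma gradDot_time_mul_left (hθ : Differentiable ℝ θ) (hf : DifferentiableAt ℝ f z) :
    gradDot (fun z => θ z.1 * f z) h z = θ z.1 * gradDot f h z := by
  rw [gradDot_mul_left (by fun_prop) hf, gradDot_time_left hθ]
  ring

lemma lap_time_mul (hθ : ContDiff ℝ 2 θ) (hf : ContDiffAt ℝ 2 f z) :
    lap (fun z => θ z.1 * f z) z = θ z.1 * lap f z := by
  have hθ' := hθ.differentiable (by simp)
  rw [lap_mul (by fun_prop) hf, gradDot_time_left hθ', lap_time hθ']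
  ring

lemma backwardHeat_time_mul (hθ : ContDiff ℝ 2 θ) (hf : ContDiffAt ℝ 2 f z) :
    backwardHeat (fun z => θ z.1 * f z) z = θ z.1 * backwardHeat f z + deriv θ z.1 * f z := by
  have hθ' := hθ.differentiable (by simp)
  rw [backwardHeat_mul (by fun_prop) hf, gradDot_time_left hθ', backwardHeat_time hθ']
  ring

lemma hessForm_time_mul (hθ : ContDiff ℝ 2 θ) (hf : ContDiffAt ℝ 2 f z) (ξ : Fin d → ℝ) :
    hessForm (fun z => θ z.1 * f z) z ξ = θ z.1 * hessForm f z ξ := by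
  have hmixed (i j : Fin d) : ∂[i] (∂[j] fun z => θ z.1 * f z) z = θ z.1 * ∂[i] (∂[j] f) z := by
    rw [dirDeriv_dirDeriv_mul (by fun_prop) hf, dx_time (hθ.differentiable (by simp)),
      dx_time (hθ.differentiable (by simp)), dirDeriv_const]
    simp
  simp only [hessForm, hmixed, Finset.mul_sum, mul_assoc]

end TimeMultiplier

section Weight

variable {d : ℕ} {S : Finset (Fin d)} {α T₀ κ a : ℝ} {z : Spacetime d}

/-- A smooth function of `y` that agrees with `√y` for `y ≥ a`. -/
def cutoffSqrt (a y : ℝ) : ℝ :=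
  smoothTransition (2 * y / a - 1) * √y

lemma contDiff_cutoffSqrt (ha : 0 < a) : ContDiff ℝ ∞ (cutoffSqrt a) := by
  rw [contDiff_iff_contDiffAt]
  intro y
  rcases lt_or_ge y (a / 2) with hy | hy
  · have h_zero : cutoffSqrt a =ᶠ[𝓝 y] fun _ => 0 := by
      filter_upwards [Iio_mem_nhds hy] with w hw
      have hw' : 2 * w / a - 1 ≤ 0 := by
        rw [sub_nonpos, div_le_one ha]
        linarith [mem_Iio.1 hw]
      rw [cutoffSqrt, smoothTransition.zero_of_nonpos hw', zero_mul]
    exact contDiffAt_const.congr_of_eventuallyEq h_zero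
  · have hy₀ : y ≠ 0 := ((half_pos ha).trans_le hy).ne'
    exact (smoothTransition.contDiffAt.comp y (by fun_prop)).mul (Real.contDiffAt_sqrt hy₀)

lemma cutoffSqrt_of_le (ha : 0 < a) {y : ℝ} (hy : a ≤ y) : cutoffSqrt a y = √y := by
  have h_one : 1 ≤ 2 * y / a - 1 := by
    rw [le_sub_iff_add_le, le_div_iff₀ ha]
    linarith
  rw [cutoffSqrt, smoothTransition.one_of_one_le h_one, one_mul]

/-- The weight `α (T₀ - t) r + κ |x|²`, with `r = axialRadius S` modified where `r² < a` so as to be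
smooth on all of space-time. -/
def carlemanWeight (S : Finset (Fin d)) (α T₀ κ a : ℝ) (z : Spacetime d) : ℝ :=
  α * (T₀ - z.1) * cutoffSqrt a (axialSq S z.2) + κ * axialSq Finset.univ z.2

lemma contDiff_carlemanWeight (S : Finset (Fin d)) (α T₀ κ : ℝ) (ha : 0 < a) :
    ContDiff ℝ ∞ (carlemanWeight S α T₀ κ a) := by
  have := contDiff_cutoffSqrt ha
  unfold carlemanWeight
  fun_prop

lemma carlemanWeight_of_le (ha : 0 < a) (hz : a ≤ axialSq S z.2) :
    carlemanWeight S α T₀ κ a z =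
      α * (T₀ - z.1) * axialRadius S z.2 + κ * axialSq Finset.univ z.2 := by
  rw [carlemanWeight, cutoffSqrt_of_le ha hz, axialRadius]

lemma eventually_lt_axialSq (hz : a < axialSq S z.2) : ∀ᶠ y in 𝓝 z, a < axialSq S y.2 :=
  ((contDiff_axialSq S (n := 0)).continuous.comp continuous_snd).continuousAt.eventually_const_lt hz

lemma carlemanWeight_eventuallyEq (ha : 0 < a) (hz : a < axialSq S z.2) :
    carlemanWeight S α T₀ κ a =ᶠ[𝓝 z] fun z =>
      α * (T₀ - z.1) * axialRadius S z.2 + κ * axialSq Finset.univ z.2 :=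
  (eventually_lt_axialSq hz).mono fun _ hy => carlemanWeight_of_le ha hy.le

lemma carlemanPotential_congr {g₁ g₂ : Spacetime d → ℝ} (h : g₁ =ᶠ[𝓝 z] g₂) :
    carlemanPotential g₁ z = carlemanPotential g₂ z := by
  rw [carlemanPotential, dirDeriv_congr h, lap_congr h, gradDot_congr_left h,
    gradDot_congr_right h, carlemanPotential]

lemma gradDot_add_right {f g h : Spacetime d → ℝ} (hf : DifferentiableAt ℝ f z)
    (hg : DifferentiableAt ℝ g z) :
    gradDot h (fun z => f z + g z) z = gradDot h f z + gradDot h g z := by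
  simp only [gradDot_comm h, gradDot_add_left hf hg]

lemma carlemanPotential_add {f g : Spacetime d → ℝ} (hf : ContDiffAt ℝ 2 f z)
    (hg : ContDiffAt ℝ 2 g z) :
    carlemanPotential (fun z => f z + g z) z =
      carlemanPotential f z + carlemanPotential g z - 2 * gradDot f g z := by
  have hf' := hf.differentiableAt (by simp)
  have hg' := hg.differentiableAt (by simp)
  simp only [carlemanPotential, dirDeriv_add hf' hg', lap_add hf hg, gradDot_add_left hf' hg',
    gradDot_add_right hf' hg', gradDot_comm g f]
  ring

lemma carlemanPotential_time_mul {θ : ℝ → ℝ} {f : Spacetime d → ℝ} (hθ : ContDiff ℝ 2 θ)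
    (hf : ContDiffAt ℝ 2 f z) :
    carlemanPotential (fun z => θ z.1 * f z) z =
      deriv θ z.1 * f z + θ z.1 * (∂ₜ f z - lap f z) - θ z.1 ^ 2 * gradDot f f z := by
  have hθ' := hθ.differentiable (by simp)
  have hf' := hf.differentiableAt (by simp)
  rw [carlemanPotential, dt_time_mul hθ' hf', lap_time_mul hθ hf, gradDot_time_mul_left hθ' hf',
    gradDot_comm, gradDot_time_mul_left hθ' hf']
  ring

lemma carlemanPotential_carlemanWeight (ha : 0 < a) (hz : a < axialSq S z.2) :
    carlemanPotential (carlemanWeight S α T₀ κ a) z =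
      -(α * (1 + 4 * κ * (T₀ - z.1))) * axialRadius S z.2
        + -(α * (S.card - 1) * (T₀ - z.1)) * (axialRadius S z.2)⁻¹
        + -(4 * κ ^ 2) * axialSq Finset.univ z.2 + -(2 * κ * d + α ^ 2 * (T₀ - z.1) ^ 2) := by
  have hz₀ := ha.trans hz
  have hθ : ContDiff ℝ 2 fun t => α * (T₀ - t) := by fun_prop
  have hκ : ContDiff ℝ 2 fun _ : ℝ => κ := by fun_prop
  have hr := contDiffAt_axialRadius hz₀
  have hN : ContDiff ℝ 2 fun z : Spacetime d => axialSq Finset.univ z.2 := by fun_prop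
  have h_cross : gradDot (fun z => α * (T₀ - z.1) * axialRadius S z.2)
      (fun z => κ * axialSq Finset.univ z.2) z =
        κ * (α * (T₀ - z.1) * (2 * axialRadius S z.2)) := by
    rw [gradDot_comm, gradDot_const_mul_left _ (by fun_prop), gradDot_comm,
      gradDot_time_mul_left (hθ.differentiable (by simp)) (hr.differentiableAt (by simp)),
      gradDot_axialRadius_axialSq_univ hz₀]
  rw [carlemanPotential_congr (carlemanWeight_eventuallyEq ha hz),
    carlemanPotential_add (by fun_prop) (by fun_prop), h_cross,
    carlemanPotential_time_mul hθ hr, carlemanPotential_time_mul hκ hN.contDiffAt,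
    dt_axialRadius hz₀, lap_axialRadius hz₀, gradDot_axialRadius_self hz₀, dt_axialSq, lap_axialSq,
    gradDot_axialSq, Finset.inter_self, Finset.card_univ, Fintype.card_fin]
  simp
  ring

lemma deriv_neg_mul_sub (c t₀ t : ℝ) : deriv (fun t => -(c * (t₀ - t))) t = c := by
  simp

lemma deriv_neg_mul_one_add_mul_sub (c b t₀ t : ℝ) :
    deriv (fun t => -(c * (1 + b * (t₀ - t)))) t = c * b := by
  simp

lemma deriv_neg_add_mul_sub_sq (b c t₀ t : ℝ) :
    deriv (fun t => -(b + c * (t₀ - t) ^ 2)) t = 2 * c * (t₀ - t) := by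
  have h := ((((hasDerivAt_id' t).const_sub t₀).fun_pow 2).const_mul c).const_add b
  rw [h.fun_neg.deriv, Nat.cast_ofNat, pow_one]
  ring

lemma backwardHeat_carlemanPotential_carlemanWeight (ha : 0 < a) (hz : a < axialSq S z.2) :
    backwardHeat (carlemanPotential (carlemanWeight S α T₀ κ a)) z =
      2 * α ^ 2 * (T₀ - z.1) + 4 * α * κ * axialRadius S z.2
        + α * (T₀ - z.1) * ((S.card - 1) * (S.card - 3)) * (axialRadius S z.2)⁻¹ ^ 3
        - 4 * α * κ * (T₀ - z.1) * (S.card - 1) * (axialRadius S z.2)⁻¹ - 8 * d * κ ^ 2 := by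
  have hz₀ := ha.trans hz
  have hA : ContDiff ℝ 2 fun t => -(α * (1 + 4 * κ * (T₀ - t))) := by fun_prop
  have hB : ContDiff ℝ 2 fun t => -(α * (S.card - 1) * (T₀ - t)) := by fun_prop
  have hC : ContDiff ℝ 2 fun _ : ℝ => -(4 * κ ^ 2) := by fun_prop
  have hD : ContDiff ℝ 2 fun t => -(2 * κ * d + α ^ 2 * (T₀ - t) ^ 2) := by fun_prop
  have hr := contDiffAt_axialRadius hz₀
  have hr_inv := contDiffAt_axialRadius_inv hz₀
  have h_ev := (eventually_lt_axialSq hz).mono fun y hy =>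
    carlemanPotential_carlemanWeight (α := α) (T₀ := T₀) (κ := κ) ha hy
  have hN : ContDiffAt ℝ 2 (fun z : Spacetime d => axialSq Finset.univ z.2) z := by fun_prop
  rw [backwardHeat_congr h_ev, backwardHeat_add (by fun_prop) (by fun_prop),
    backwardHeat_add (by fun_prop) (by fun_prop), backwardHeat_add (by fun_prop) (by fun_prop),
    backwardHeat_time_mul hA hr, backwardHeat_time_mul hB hr_inv, backwardHeat_time_mul hC hN,
    backwardHeat_time (hD.differentiable (by simp)), backwardHeat_axialRadius hz₀,
    backwardHeat_axialRadius_inv hz₀, backwardHeat_axialSq, Finset.card_univ, Fintype.card_fin]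
  rw [deriv_neg_mul_one_add_mul_sub, deriv_neg_mul_sub, deriv_const, deriv_neg_add_mul_sub_sq]
  ring

lemma le_hessForm_carlemanWeight (ha : 0 < a) (hz : a < axialSq S z.2) (hα : 0 ≤ α)
    (ht : z.1 ≤ T₀) (ξ : Fin d → ℝ) :
    2 * κ * ∑ i, ξ i ^ 2 ≤ hessForm (carlemanWeight S α T₀ κ a) z ξ := by
  have hz₀ := ha.trans hz
  have hθ : ContDiff ℝ 2 fun t => α * (T₀ - t) := by fun_prop
  have hκ : ContDiff ℝ 2 fun _ : ℝ => κ := by fun_prop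
  have hr := contDiffAt_axialRadius hz₀
  have hN : ContDiffAt ℝ 2 (fun z : Spacetime d => axialSq Finset.univ z.2) z := by fun_prop
  have h_radial : 0 ≤ α * (T₀ - z.1) * hessForm (fun z => axialRadius S z.2) z ξ :=
    mul_nonneg (mul_nonneg hα (sub_nonneg.2 ht)) (hessForm_axialRadius_nonneg hz₀ ξ)
  rw [hessForm_congr (carlemanWeight_eventuallyEq ha hz), hessForm_add (by fun_prop) (by fun_prop),
    hessForm_time_mul hθ hr, hessForm_time_mul hκ hN, hessForm_axialSq]
  linarith

end Weight

section Cutoff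

variable {d : ℕ} {f g : Spacetime d → ℝ} {k : ℝ → ℝ} {m a b : ℝ} {S : Finset (Fin d)}
  {z : Spacetime d}

lemma two_mul_abs_gradDot_le (f g : Spacetime d → ℝ) (z : Spacetime d) :
    2 * |gradDot f g z| ≤ gradDot f f z + gradDot g g z := by
  have h := Finset.abs_sum_le_sum_abs (fun i => ∂[i] f z * ∂[i] g z) Finset.univ
  rw [gradDot_self, gradDot_self, ← Finset.sum_add_distrib]
  refine (mul_le_mul_of_nonneg_left h zero_le_two).trans ?_
  rw [Finset.mul_sum]
  refine Finset.sum_le_sum fun i _ => ?_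
  rw [abs_mul, ← sq_abs (∂[i] f z), ← sq_abs (∂[i] g z), ← mul_assoc]
  exact two_mul_le_add_sq _ _

lemma gradDot_mul_self_le (hf : DifferentiableAt ℝ f z) (hg : DifferentiableAt ℝ g z) :
    gradDot (fun z => f z * g z) (fun z => f z * g z) z ≤
      2 * (f z ^ 2 * gradDot g g z + g z ^ 2 * gradDot f f z) := by
  simp only [gradDot_self, dirDeriv_mul hf hg, Finset.mul_sum, ← Finset.sum_add_distrib,
    ← mul_pow]
  exact Finset.sum_le_sum fun i _ => add_sq_le

/-- Time-independent smooth cutoff functions with `|∇f|²` and `|Δf|` bounded by `m`. -/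
structure IsCutoff (m : ℝ) (f : Spacetime d → ℝ) : Prop where
  contDiff : ContDiff ℝ ∞ f
  nonneg : ∀ z, 0 ≤ f z
  le_one : ∀ z, f z ≤ 1
  dt_eq_zero : ∀ z, ∂ₜ f z = 0
  gradDot_le : ∀ z, gradDot f f z ≤ m
  abs_lap_le : ∀ z, |lap f z| ≤ m

namespace IsCutoff

lemma mono {m' : ℝ} (hf : IsCutoff m f) (hm : m ≤ m') : IsCutoff m' f :=
  { hf with
    gradDot_le := fun z => (hf.gradDot_le z).trans hm
    abs_lap_le := fun z => (hf.abs_lap_le z).trans hm }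

lemma sq_le_one (hf : IsCutoff m f) (z : Spacetime d) : f z ^ 2 ≤ 1 :=
  pow_le_one₀ (hf.nonneg z) (hf.le_one z)

lemma differentiableAt (hf : IsCutoff m f) (z : Spacetime d) : DifferentiableAt ℝ f z :=
  differentiableAt_of_contDiff hf.contDiff

lemma contDiffAt (hf : IsCutoff m f) (z : Spacetime d) : ContDiffAt ℝ 2 f z :=
  hf.contDiff.contDiffAt.of_le (by norm_cast)

lemma mul (hf : IsCutoff m f) (hg : IsCutoff m g) : IsCutoff (4 * m) fun z => f z * g z where
  contDiff := hf.contDiff.mul hg.contDiff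
  nonneg z := mul_nonneg (hf.nonneg z) (hg.nonneg z)
  le_one z := mul_le_one₀ (hf.le_one z) (hg.nonneg z) (hg.le_one z)
  dt_eq_zero z := by
    rw [dirDeriv_mul (hf.differentiableAt z) (hg.differentiableAt z), hf.dt_eq_zero,
      hg.dt_eq_zero, mul_zero, mul_zero, add_zero]
  gradDot_le z := by
    have h_left : f z ^ 2 * gradDot g g z ≤ m :=
      (mul_le_of_le_one_left (gradDot_self_nonneg g z) (hf.sq_le_one z)).trans (hg.gradDot_le z)
    have h_right : g z ^ 2 * gradDot f f z ≤ m :=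
      (mul_le_of_le_one_left (gradDot_self_nonneg f z) (hg.sq_le_one z)).trans (hf.gradDot_le z)
    linarith [gradDot_mul_self_le (hf.differentiableAt z) (hg.differentiableAt z)]
  abs_lap_le z := by
    have h_left : |f z * lap g z| ≤ m := by
      rw [abs_mul, abs_of_nonneg (hf.nonneg z)]
      exact (mul_le_of_le_one_left (abs_nonneg _) (hf.le_one z)).trans (hg.abs_lap_le z)
    have h_right : |g z * lap f z| ≤ m := by
      rw [abs_mul, abs_of_nonneg (hg.nonneg z)]
      exact (mul_le_of_le_one_left (abs_nonneg _) (hg.le_one z)).trans (hf.abs_lap_le z)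
    have h_cross : |2 * gradDot f g z| ≤ 2 * m := by
      rw [abs_mul, abs_two]
      linarith [two_mul_abs_gradDot_le f g z, hf.gradDot_le z, hg.gradDot_le z]
    rw [lap_mul (hf.contDiffAt z) (hg.contDiffAt z)]
    exact (abs_add_three _ _ _).trans (by linarith)

end IsCutoff

lemma gradDot_radial (hk : ContDiff ℝ ∞ k) (c : ℝ) (S : Finset (Fin d)) (z : Spacetime d) :
    gradDot (fun z => k (c * axialSq S z.2)) (fun z => k (c * axialSq S z.2)) z =
      4 * c * (c * axialSq S z.2 * deriv k (c * axialSq S z.2) ^ 2) := by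
  have hk' := (hk.differentiable (by simp) (c * axialSq S z.2)).hasDerivAt
  have h_left (h : Spacetime d → ℝ) : gradDot (fun z => k (c * axialSq S z.2)) h z =
      deriv k (c * axialSq S z.2) * (c * gradDot (fun z => axialSq S z.2) h z) := by
    rw [gradDot_comp_left (f := fun z : Spacetime d => c * axialSq S z.2) hk' (by fun_prop),
      gradDot_const_mul_left _ (by fun_prop)]
  rw [h_left, gradDot_comm, h_left, gradDot_axialSq, Finset.inter_self]
  ring

lemma lap_radial (hk : ContDiff ℝ ∞ k) (c : ℝ) (S : Finset (Fin d)) (z : Spacetime d) :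
    lap (fun z => k (c * axialSq S z.2)) z =
      4 * c * (c * axialSq S z.2 * deriv (deriv k) (c * axialSq S z.2))
        + 2 * c * S.card * deriv k (c * axialSq S z.2) := by
  have hk' : ContDiff ℝ ∞ (deriv k) := (contDiff_infty_iff_deriv.1 hk).2
  have h_lap : lap (fun z : Spacetime d => c * axialSq S z.2) z = c * (2 * S.card) := by
    rw [lap_time_mul (θ := fun _ => c) (by fun_prop) (by fun_prop), lap_axialSq]
  have h_grad : gradDot (fun z : Spacetime d => c * axialSq S z.2) (fun z => c * axialSq S z.2) z =
      c * (c * (4 * axialSq S z.2)) := by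
    rw [gradDot_const_mul_left _ (by fun_prop), gradDot_comm,
      gradDot_const_mul_left _ (by fun_prop), gradDot_axialSq, Finset.inter_self]
  rw [lap_comp (f := fun z : Spacetime d => c * axialSq S z.2)
    (.of_forall fun y => (hk.differentiable (by simp) y).hasDerivAt)
    (hk'.differentiable (by simp) _).hasDerivAt (by fun_prop), h_lap, h_grad]
  ring

lemma exists_bound_of_hasCompactSupport_deriv (hk : ContDiff ℝ ∞ k)
    (hc : HasCompactSupport (deriv k)) :
    ∃ M, ∀ y, |deriv k y| ≤ M ∧ y * deriv k y ^ 2 ≤ M ∧ |y * deriv (deriv k) y| ≤ M := by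
  have hk' : ContDiff ℝ ∞ (deriv k) := (contDiff_infty_iff_deriv.1 hk).2
  have hk'' : ContDiff ℝ ∞ (deriv (deriv k)) := (contDiff_infty_iff_deriv.1 hk').2
  have hc_sq : HasCompactSupport fun y => y * deriv k y ^ 2 :=
    (hc.comp_left (g := fun y => y ^ 2) (by simp)).mul_left
  obtain ⟨M₁, hM₁⟩ := hc.exists_bound_of_continuous hk'.continuous
  obtain ⟨M₂, hM₂⟩ := hc_sq.exists_bound_of_continuous
    (continuous_id.mul (hk'.continuous.pow 2))
  obtain ⟨M₃, hM₃⟩ := (hc.deriv.mul_left (f := fun y => y)).exists_bound_of_continuous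
    (continuous_id.mul hk''.continuous)
  exact ⟨max M₁ (max M₂ M₃), fun y => ⟨le_max_of_le_left (hM₁ y),
    le_max_of_le_right (le_max_of_le_left ((le_abs_self _).trans (hM₂ y))),
    le_max_of_le_right (le_max_of_le_right (hM₃ y))⟩⟩

lemma exists_isCutoff_radial (d : ℕ) (hk : ContDiff ℝ ∞ k) (hk₀ : ∀ y, 0 ≤ k y)
    (hk₁ : ∀ y, k y ≤ 1) (hc : HasCompactSupport (deriv k)) :
    ∃ K, 0 ≤ K ∧ ∀ (S : Finset (Fin d)) (c : ℝ), 0 ≤ c →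
      IsCutoff (K * c) fun z : Spacetime d => k (c * axialSq S z.2) := by
  obtain ⟨M, hM⟩ := exists_bound_of_hasCompactSupport_deriv hk hc
  have hM₀ : 0 ≤ M := (abs_nonneg _).trans (hM 0).1
  refine ⟨(4 + 2 * d) * M, by positivity, fun S c hc₀ => ?_⟩
  have hcM : 0 ≤ c * M := mul_nonneg hc₀ hM₀
  exact
  { contDiff := by fun_prop
    nonneg _ := hk₀ _
    le_one _ := hk₁ _
    dt_eq_zero z := by
      rw [dirDeriv_comp (f := fun z : Spacetime d => c * axialSq S z.2)
        (hk.differentiable (by simp) _).hasDerivAt (by fun_prop),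
        dirDeriv_const_mul _ (by fun_prop), dt_axialSq, mul_zero, mul_zero]
    gradDot_le z := by
      rw [gradDot_radial hk]
      have h := mul_le_mul_of_nonneg_left (hM (c * axialSq S z.2)).2.1 hc₀
      nlinarith [mul_nonneg (Nat.cast_nonneg (α := ℝ) d) hcM]
    abs_lap_le z := by
      obtain ⟨h_first, -, h_second⟩ := hM (c * axialSq S z.2)
      have h_card : (S.card : ℝ) ≤ d := by simpa using Nat.cast_le (α := ℝ).2 S.card_le_univ
      rw [lap_radial hk]
      refine (abs_add_le _ _).trans ?_
      rw [abs_mul, abs_of_nonneg (by positivity : 0 ≤ 4 * c), abs_mul (2 * c * S.card),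
        abs_of_nonneg (by positivity : 0 ≤ 2 * c * S.card)]
      calc 4 * c * |c * axialSq S z.2 * deriv (deriv k) (c * axialSq S z.2)|
            + 2 * c * S.card * |deriv k (c * axialSq S z.2)|
        _ ≤ 4 * c * M + 2 * c * d * M := by gcongr
        _ = (4 + 2 * d) * M * c := by ring }

lemma hasCompactSupport_deriv_of_eqOn_const {l r c e : ℝ} (hl : ∀ y < l, k y = c)
    (hr : ∀ y > r, k y = e) : HasCompactSupport (deriv k) := by
  refine HasCompactSupport.intro (isCompact_Icc (a := l) (b := r)) fun y hy => ?_
  have h_const {c : ℝ} (h : k =ᶠ[𝓝 y] fun _ => c) : deriv k y = 0 := by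
    rw [h.deriv_eq, deriv_const]
  rcases lt_or_ge y l with hyl | hly
  · exact h_const ((eventually_lt_nhds hyl).mono hl)
  · exact h_const ((eventually_gt_nhds (not_le.1 fun hyr => hy ⟨hly, hyr⟩)).mono hr)

/-- The profile, as a function of `y = r² / a`, of a cutoff vanishing for `y ≤ 2` and equal to `1`
for `y ≥ 3`. -/
def innerProfile (y : ℝ) : ℝ :=
  smoothTransition (y - 2)

/-- The profile, as a function of `y = r² / b`, of a cutoff equal to `1` for `y ≤ 1 / 3` and
vanishing for `y ≥ 1 / 2`. -/
def outerProfile (y : ℝ) : ℝ :=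
  smoothTransition (3 - 6 * y)

lemma hasCompactSupport_deriv_innerProfile : HasCompactSupport (deriv innerProfile) :=
  hasCompactSupport_deriv_of_eqOn_const (l := 2) (r := 3)
    (fun _ _ => smoothTransition.zero_of_nonpos (by linarith))
    (fun _ _ => smoothTransition.one_of_one_le (by linarith))

lemma hasCompactSupport_deriv_outerProfile : HasCompactSupport (deriv outerProfile) :=
  hasCompactSupport_deriv_of_eqOn_const (l := 1 / 3) (r := 1 / 2)
    (fun _ _ => smoothTransition.one_of_one_le (by linarith))
    (fun _ _ => smoothTransition.zero_of_nonpos (by linarith))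

/-- The cutoff to the cylindrical shell `{a ≲ r², r² ≲ b, |z|² ≲ b}`, where `r` and `|z|` are the
axial radii of `S` and of its complement. -/
def shellCutoff (S : Finset (Fin d)) (a b : ℝ) (z : Spacetime d) : ℝ :=
  innerProfile (a⁻¹ * axialSq S z.2) *
    (outerProfile (b⁻¹ * axialSq S z.2) * outerProfile (b⁻¹ * axialSq Sᶜ z.2))

lemma exists_isCutoff_shellCutoff (d : ℕ) :
    ∃ K, 0 ≤ K ∧ ∀ (S : Finset (Fin d)) (a b : ℝ), 0 < a → a ≤ b →
      IsCutoff (K * a⁻¹) (shellCutoff S a b) := by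
  obtain ⟨K₁, hK₁, h_inner⟩ := exists_isCutoff_radial d (k := innerProfile)
    (smoothTransition.contDiff.comp (by fun_prop)) (fun _ => smoothTransition.nonneg _)
    (fun _ => smoothTransition.le_one _) hasCompactSupport_deriv_innerProfile
  obtain ⟨K₂, hK₂, h_outer⟩ := exists_isCutoff_radial d (k := outerProfile)
    (smoothTransition.contDiff.comp (by fun_prop)) (fun _ => smoothTransition.nonneg _)
    (fun _ => smoothTransition.le_one _) hasCompactSupport_deriv_outerProfile
  refine ⟨4 * (K₁ + 4 * K₂), by positivity, fun S a b ha hab => ?_⟩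
  have hb : 0 < b := ha.trans_le hab
  have h_inv : K₂ * b⁻¹ ≤ K₂ * a⁻¹ := by gcongr
  have hK₁a : 0 ≤ K₁ * a⁻¹ := by positivity
  have hK₂a : 0 ≤ K₂ * a⁻¹ := by positivity
  have h_first := (h_inner S a⁻¹ (by positivity)).mono (m' := (K₁ + 4 * K₂) * a⁻¹) (by linarith)
  have h_rest := (((h_outer S b⁻¹ (by positivity)).mono h_inv).mul
    ((h_outer Sᶜ b⁻¹ (by positivity)).mono h_inv)).mono (m' := (K₁ + 4 * K₂) * a⁻¹) (by linarith)
  exact (h_first.mul h_rest).mono (by linarith)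

lemma shellCutoff_eq_one (ha : 0 < a) (hb : 0 < b) (h_inner : 3 * a ≤ axialSq S z.2)
    (h_outer : axialSq S z.2 ≤ b / 3) (h_compl : axialSq Sᶜ z.2 ≤ b / 3) :
    shellCutoff S a b z = 1 := by
  have h₁ : 3 ≤ a⁻¹ * axialSq S z.2 := by rwa [inv_mul_eq_div, le_div_iff₀ ha]
  have h₂ : b⁻¹ * axialSq S z.2 ≤ 1 / 3 := by rw [inv_mul_eq_div, div_le_iff₀ hb]; linarith
  have h₃ : b⁻¹ * axialSq Sᶜ z.2 ≤ 1 / 3 := by rw [inv_mul_eq_div, div_le_iff₀ hb]; linarith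
  rw [shellCutoff, innerProfile, outerProfile, outerProfile,
    smoothTransition.one_of_one_le (by linarith), smoothTransition.one_of_one_le (by linarith),
    smoothTransition.one_of_one_le (by linarith), one_mul, one_mul]

lemma bounds_of_shellCutoff_ne_zero (ha : 0 < a) (hb : 0 < b) (h : shellCutoff S a b z ≠ 0) :
    2 * a ≤ axialSq S z.2 ∧ axialSq S z.2 ≤ b / 2 ∧ axialSq Sᶜ z.2 ≤ b / 2 := by
  obtain ⟨h₁, h₂, h₃⟩ : innerProfile (a⁻¹ * axialSq S z.2) ≠ 0 ∧
      outerProfile (b⁻¹ * axialSq S z.2) ≠ 0 ∧ outerProfile (b⁻¹ * axialSq Sᶜ z.2) ≠ 0 := by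
    simpa [shellCutoff] using h
  have h_inner {y : ℝ} (hy : innerProfile y ≠ 0) : 2 < y := by
    by_contra! hcon
    exact hy (smoothTransition.zero_of_nonpos (by linarith))
  have h_outer {y : ℝ} (hy : outerProfile y ≠ 0) : y < 1 / 2 := by
    by_contra! hcon
    exact hy (smoothTransition.zero_of_nonpos (by linarith))
  replace h₁ := h_inner h₁
  replace h₂ := h_outer h₂
  replace h₃ := h_outer h₃
  rw [inv_mul_eq_div, lt_div_iff₀ ha] at h₁
  rw [inv_mul_eq_div, div_lt_iff₀ hb] at h₂ h₃
  exact ⟨h₁.le, by linarith, by linarith⟩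

lemma bounds_of_mem_tsupport_shellCutoff_mul (ha : 0 < a) (hb : 0 < b) {u : Spacetime d → ℝ}
    (hz : z ∈ tsupport fun z => shellCutoff S a b z * u z) :
    2 * a ≤ axialSq S z.2 ∧ axialSq S z.2 ≤ b / 2 ∧ axialSq Sᶜ z.2 ≤ b / 2 := by
  have h_cont (R : Finset (Fin d)) : Continuous fun z : Spacetime d => axialSq R z.2 :=
    (contDiff_axialSq R (n := 0)).continuous.comp continuous_snd
  have h_closed : IsClosed {z : Spacetime d |
      2 * a ≤ axialSq S z.2 ∧ axialSq S z.2 ≤ b / 2 ∧ axialSq Sᶜ z.2 ≤ b / 2} :=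
    (isClosed_le continuous_const (h_cont S)).inter <|
      (isClosed_le (h_cont S) continuous_const).inter (isClosed_le (h_cont Sᶜ) continuous_const)
  exact closure_minimal (fun y hy => bounds_of_shellCutoff_ne_zero ha hb (left_ne_zero_of_mul hy))
    h_closed hz

end Cutoff

section ShellRegion

variable {d : ℕ} {S : Finset (Fin d)} {a b : ℝ}

/-- The closed cylindrical shell `a ≤ r² ≤ b`, `|z|² ≤ b`, where `r` is the radius in the
coordinates of `S` and `|z|` the radius in the remaining ones. -/
def shellRegion (S : Finset (Fin d)) (a b : ℝ) : Set (EuclideanSpace ℝ (Fin d)) :=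
  {x | a ≤ axialSq S x ∧ axialSq S x ≤ b ∧ axialSq Sᶜ x ≤ b}

lemma shellRegion_subset {a' b' : ℝ} (ha : a' ≤ a) (hb : b ≤ b') :
    shellRegion S a b ⊆ shellRegion S a' b' :=
  fun _ ⟨h₁, h₂, h₃⟩ => ⟨ha.trans h₁, h₂.trans hb, h₃.trans hb⟩

lemma axialSq_univ_eq_add (S : Finset (Fin d)) (x : EuclideanSpace ℝ (Fin d)) :
    axialSq Finset.univ x = axialSq S x + axialSq Sᶜ x :=
  (Finset.sum_add_sum_compl S _).symm

lemma axialSq_univ (x : EuclideanSpace ℝ (Fin d)) : axialSq Finset.univ x = ‖x‖ ^ 2 :=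
  (EuclideanSpace.real_norm_sq_eq x).symm

lemma isClosed_shellRegion (S : Finset (Fin d)) (a b : ℝ) : IsClosed (shellRegion S a b) := by
  have hc (R : Finset (Fin d)) : Continuous (axialSq R) := (contDiff_axialSq R (n := 0)).continuous
  exact (isClosed_le continuous_const (hc S)).inter
    ((isClosed_le (hc S) continuous_const).inter (isClosed_le (hc Sᶜ) continuous_const))

lemma isCompact_shellRegion (S : Finset (Fin d)) (a b : ℝ) : IsCompact (shellRegion S a b) := by
  refine (isCompact_closedBall 0 √(2 * b)).of_isClosed_subset (isClosed_shellRegion S a b) ?_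
  rintro x ⟨-, h₂, h₃⟩
  rw [mem_closedBall_zero_iff]
  apply Real.le_sqrt_of_sq_le
  rw [← axialSq_univ, axialSq_univ_eq_add S]
  linarith

end ShellRegion

/-- The scales of the estimate: the axial coordinates, which define the radius `r`, the duration
`T`, the radii `r₋ = rm` and `r₊ = rp`, and `κ = 1 / (C₀ T)`, in terms of which
`C₀ = 1 / (κ T)`. -/
structure ShellScales (d : ℕ) where
  axial : Finset (Fin d)
  T : ℝ
  κ : ℝ
  rm : ℝ
  rp : ℝ
  axial_nonempty : axial.Nonempty
  T_pos : 0 < T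
  κ_pos : 0 < κ
  rm_pos : 0 < rm
  rm_lt_rp : rm < rp
  six_mul_dim_mul_le : 6 * (d * (κ * T)) ≤ 1
  four_le : 4 ≤ κ * rm ^ 2

namespace ShellScales

variable {d : ℕ} (P : ShellScales d)

lemma rp_pos : 0 < P.rp := P.rm_pos.trans P.rm_lt_rp

lemma one_le_card : (1 : ℝ) ≤ P.axial.card := by exact_mod_cast P.axial_nonempty.card_pos

lemma card_le_dim : (P.axial.card : ℝ) ≤ d := by exact_mod_cast card_finset_fin_le P.axial

lemma six_mul_le : 6 * (P.κ * P.T) ≤ 1 := by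
  have h_pos := mul_pos P.κ_pos P.T_pos
  have h_dim := P.one_le_card.trans P.card_le_dim
  linarith [P.six_mul_dim_mul_le, le_mul_of_one_le_left h_pos.le h_dim]

lemma dim_mul_κ_le : d * P.κ ≤ P.T⁻¹ / 6 := by
  rw [inv_eq_one_div, div_div, le_div_iff₀ (mul_pos P.T_pos (by norm_num))]
  linarith [P.six_mul_dim_mul_le]

lemma κ_le : P.κ ≤ P.T⁻¹ / 6 := by
  rw [inv_eq_one_div, div_div, le_div_iff₀ (mul_pos P.T_pos (by norm_num))]
  linarith [P.six_mul_le]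

/-- The coefficient `α = r₊ / (2 C₀ T²)` of the radial part of the weight. -/
def α : ℝ := P.rp * P.κ / (2 * P.T)

lemma α_pos : 0 < P.α :=
  div_pos (mul_pos P.rp_pos P.κ_pos) (mul_pos two_pos P.T_pos)

lemma α_mul_T : P.α * P.T = P.rp * P.κ / 2 := by
  have := P.T_pos.ne'
  rw [α]
  field_simp

lemma α_mul_le {τ : ℝ} (hτ : τ ≤ P.T) : P.α * τ ≤ P.rp * P.κ / 2 :=
  P.α_mul_T ▸ mul_le_mul_of_nonneg_left hτ P.α_pos.le

/-- The weight `α (T₀ - t) r + |x|² / (C₀ T)`, whose radial part vanishes at the final time `T₀`. -/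
def weight (T₀ : ℝ) : Spacetime d → ℝ := carlemanWeight P.axial P.α T₀ P.κ (P.rm ^ 2)

/-- The part of the shell in which the cutoff solution is supported. -/
abbrev supportRegion : Set (EuclideanSpace ℝ (Fin d)) :=
  shellRegion P.axial (2 * P.rm ^ 2) (P.rp ^ 2 / 2)

section Radius

variable {P} {x : EuclideanSpace ℝ (Fin d)} (hx : x ∈ P.supportRegion)
include hx

lemma sq_rm_lt : P.rm ^ 2 < axialSq P.axial x := by
  linarith [hx.1, pow_pos P.rm_pos 2]

lemma rm_lt_axialRadius : P.rm < axialRadius P.axial x := Real.lt_sqrt_of_sq_lt (sq_rm_lt hx)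

lemma axialRadius_pos_of_mem : 0 < axialRadius P.axial x := P.rm_pos.trans (rm_lt_axialRadius hx)

lemma axialRadius_le_rp : axialRadius P.axial x ≤ P.rp :=
  Real.sqrt_le_iff.2 ⟨P.rp_pos.le, hx.2.1.trans (half_le_self (sq_nonneg _))⟩

lemma four_le_κ_mul_sq : 4 ≤ P.κ * axialRadius P.axial x ^ 2 := by
  rw [axialRadius_sq]
  exact P.four_le.trans (mul_le_mul_of_nonneg_left (sq_rm_lt hx).le P.κ_pos.le)

lemma inv_axialRadius_sq_le : (axialRadius P.axial x)⁻¹ ^ 2 ≤ P.κ / 4 := by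
  rw [inv_pow, inv_eq_one_div, div_le_iff₀ (pow_pos (axialRadius_pos_of_mem hx) 2)]
  linarith [four_le_κ_mul_sq hx]

lemma inv_axialRadius_le : (axialRadius P.axial x)⁻¹ ≤ P.κ / 4 * axialRadius P.axial x := by
  have hr := axialRadius_pos_of_mem hx
  rw [inv_eq_one_div, div_le_iff₀ hr]
  linarith [four_le_κ_mul_sq hx]

lemma inv_axialRadius_pow_three_le :
    (axialRadius P.axial x)⁻¹ ^ 3 ≤ P.κ ^ 2 / 16 * axialRadius P.axial x := by
  have hr := axialRadius_pos_of_mem hx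
  have hκ := P.κ_pos
  calc (axialRadius P.axial x)⁻¹ ^ 3
      = (axialRadius P.axial x)⁻¹ ^ 2 * (axialRadius P.axial x)⁻¹ := by ring
    _ ≤ P.κ / 4 * (P.κ / 4 * axialRadius P.axial x) := by
        gcongr
        exacts [inv_axialRadius_sq_le hx, inv_axialRadius_le hx]
    _ = _ := by ring

lemma axialSq_univ_le : axialSq Finset.univ x ≤ P.rp ^ 2 := by
  rw [axialSq_univ_eq_add P.axial]
  linarith [hx.2.1, hx.2.2]

end Radius

section Potential

variable {P} {T₀ : ℝ} {z : Spacetime d} (hz : z.2 ∈ P.supportRegion)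
include hz

lemma weight_eq : P.weight T₀ z =
    P.α * (T₀ - z.1) * axialRadius P.axial z.2 + P.κ * axialSq Finset.univ z.2 :=
  carlemanWeight_of_le (pow_pos P.rm_pos 2) (sq_rm_lt hz).le

lemma le_hessForm_weight (ht : z.1 ≤ T₀) (ξ : Fin d → ℝ) :
    2 * P.κ * ∑ i, ξ i ^ 2 ≤ hessForm (P.weight T₀) z ξ :=
  le_hessForm_carlemanWeight (pow_pos P.rm_pos 2) (sq_rm_lt hz) P.α_pos.le ht ξ

lemma carlemanPotential_weight : carlemanPotential (P.weight T₀) z =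
    -(P.α * (1 + 4 * P.κ * (T₀ - z.1))) * axialRadius P.axial z.2
      + -(P.α * (P.axial.card - 1) * (T₀ - z.1)) * (axialRadius P.axial z.2)⁻¹
      + -(4 * P.κ ^ 2) * axialSq Finset.univ z.2
      + -(2 * P.κ * d + P.α ^ 2 * (T₀ - z.1) ^ 2) :=
  carlemanPotential_carlemanWeight (pow_pos P.rm_pos 2) (sq_rm_lt hz)

lemma carlemanPotential_weight_nonpos (ht : z.1 ≤ T₀) :
    carlemanPotential (P.weight T₀) z ≤ 0 := by
  have hα := P.α_pos
  have hκ := P.κ_pos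
  have hr := axialRadius_pos_of_mem hz
  have := sub_nonneg.2 ht
  have hn := sub_nonneg.2 P.one_le_card
  have hN := axialSq_nonneg Finset.univ z.2
  rw [carlemanPotential_weight hz]
  simp only [neg_mul, ← neg_add]
  exact neg_nonpos.2 (by positivity)

lemma neg_carlemanPotential_weight_le (ht : z.1 ∈ Icc 0 T₀) (hT₀ : T₀ ≤ P.T) :
    -carlemanPotential (P.weight T₀) z ≤ 2 * P.T⁻¹ * (1 + P.κ * P.rp ^ 2) := by
  have hκ := P.κ_pos
  have hα := P.α_pos
  have hrp := P.rp_pos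
  have hT := inv_pos.2 P.T_pos
  have hr := axialRadius_pos_of_mem hz
  have hr_le := axialRadius_le_rp hz
  have := sub_nonneg.2 P.one_le_card
  have hτ : 0 ≤ T₀ - z.1 := sub_nonneg.2 ht.2
  have hατ : P.α * (T₀ - z.1) ≤ P.rp * P.κ / 2 := P.α_mul_le (by linarith [ht.1])
  have hκs : P.κ * (P.κ * P.rp ^ 2) ≤ P.T⁻¹ / 6 * (P.κ * P.rp ^ 2) := by
    gcongr
    exact P.κ_le
  have hds : (d * P.κ) * (P.κ * P.rp ^ 2) ≤ P.T⁻¹ / 6 * (P.κ * P.rp ^ 2) := by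
    gcongr
    exact P.dim_mul_κ_le
  have h_time : P.α * axialRadius P.axial z.2 ≤ P.T⁻¹ * (P.κ * P.rp ^ 2) / 2 := by
    calc P.α * axialRadius P.axial z.2 ≤ P.α * P.rp := by gcongr
      _ = P.T⁻¹ * (P.κ * P.rp ^ 2) / 2 := by rw [α]; field_simp
  have h_cross : 4 * P.κ * (P.α * (T₀ - z.1) * axialRadius P.axial z.2) ≤
      4 * P.κ * (P.rp * P.κ / 2 * P.rp) := by gcongr
  have h_lap : (P.axial.card - 1) * (P.α * (T₀ - z.1) * (axialRadius P.axial z.2)⁻¹) ≤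
      d * (P.rp * P.κ / 2 * (P.κ / 4 * P.rp)) := by
    gcongr
    · linarith [P.card_le_dim]
    · exact (inv_axialRadius_le hz).trans (by gcongr)
  have h_quadratic : 4 * P.κ ^ 2 * axialSq Finset.univ z.2 ≤ 4 * P.κ ^ 2 * P.rp ^ 2 := by
    gcongr
    exact axialSq_univ_le hz
  have h_sq : (P.α * (T₀ - z.1)) ^ 2 ≤ (P.rp * P.κ / 2) ^ 2 := by gcongr
  have h_pos : 0 ≤ P.T⁻¹ * (P.κ * P.rp ^ 2) := by positivity
  rw [carlemanPotential_weight hz]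
  linarith [P.dim_mul_κ_le]

lemma two_mul_κ_le : 2 * P.κ ≤ P.α * P.κ * axialRadius P.axial z.2 * P.T := by
  have hκ := P.κ_pos
  have hr := axialRadius_pos_of_mem hz
  calc 2 * P.κ = P.κ / 2 * 4 := by ring
    _ ≤ P.κ / 2 * (P.κ * (P.rp * axialRadius P.axial z.2)) := by
        gcongr
        refine (four_le_κ_mul_sq hz).trans ?_
        rw [sq]
        gcongr
        exact axialRadius_le_rp hz
    _ = P.κ * axialRadius P.axial z.2 * (P.rp * P.κ / 2) := by ring
    _ = _ := by rw [← P.α_mul_T]; ring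

lemma neg_le_cubic_term (ht : z.1 ∈ Icc 0 T₀) (hT₀ : T₀ ≤ P.T) :
    -(P.α * P.κ * axialRadius P.axial z.2) ≤
      P.α * (T₀ - z.1) * ((P.axial.card - 1) * (P.axial.card - 3))
        * (axialRadius P.axial z.2)⁻¹ ^ 3 := by
  have hκ := P.κ_pos
  have hα := P.α_pos
  have hr := axialRadius_pos_of_mem hz
  have hτ : 0 ≤ T₀ - z.1 := sub_nonneg.2 ht.2
  have hτ_le : T₀ - z.1 ≤ P.T := by linarith [ht.1]
  have h_card : -1 ≤ ((P.axial.card : ℝ) - 1) * (P.axial.card - 3) := by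
    nlinarith [sq_nonneg ((P.axial.card : ℝ) - 2)]
  have h_le : P.α * (T₀ - z.1) * (axialRadius P.axial z.2)⁻¹ ^ 3 ≤
      P.α * P.T * (P.κ ^ 2 / 16 * axialRadius P.axial z.2) := by
    have := P.T_pos
    gcongr
    exact inv_axialRadius_pow_three_le hz
  have h_nonneg : 0 ≤ P.α * (T₀ - z.1) * (axialRadius P.axial z.2)⁻¹ ^ 3 := by positivity
  have h_pos : 0 ≤ P.α * P.κ * axialRadius P.axial z.2 := by positivity
  linarith [mul_le_mul_of_nonneg_left h_card h_nonneg,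
    mul_le_mul_of_nonneg_left P.six_mul_le h_pos]

lemma four_mul_κ_le_backwardHeat_carlemanPotential_weight (ht : z.1 ∈ Icc 0 T₀)
    (hT₀ : T₀ ≤ P.T) :
    4 * P.κ * P.T⁻¹ ≤ backwardHeat (carlemanPotential (P.weight T₀)) z := by
  have hκ := P.κ_pos
  have hα := P.α_pos
  have hT := P.T_pos
  have hr := axialRadius_pos_of_mem hz
  have hn := sub_nonneg.2 P.one_le_card
  have hτ : 0 ≤ T₀ - z.1 := sub_nonneg.2 ht.2
  have hτ_le : T₀ - z.1 ≤ P.T := by linarith [ht.1]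
  set m := P.α * P.κ * axialRadius P.axial z.2
  have hm_pos : 0 < m := by positivity
  have h_linear : 4 * P.α * P.κ * (T₀ - z.1) * (P.axial.card - 1) * (axialRadius P.axial z.2)⁻¹ ≤
      m / 6 := by
    calc 4 * P.α * P.κ * (T₀ - z.1) * (P.axial.card - 1) * (axialRadius P.axial z.2)⁻¹
        ≤ 4 * P.α * P.κ * P.T * d * (P.κ / 4 * axialRadius P.axial z.2) := by
          gcongr
          · linarith [P.card_le_dim]
          · exact inv_axialRadius_le hz
      _ = m * (d * (P.κ * P.T)) := by ring
      _ ≤ m / 6 := by linarith [mul_le_mul_of_nonneg_left P.six_mul_dim_mul_le hm_pos.le]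
  have h_const : 8 * d * P.κ ^ 2 ≤ 2 / 3 * m := by
    calc 8 * d * P.κ ^ 2 = 4 * (d * P.κ) * (2 * P.κ) := by ring
      _ ≤ 4 * (d * P.κ) * (m * P.T) := mul_le_mul_of_nonneg_left (two_mul_κ_le hz) (by positivity)
      _ = 4 * m * (d * (P.κ * P.T)) := by ring
      _ ≤ 2 / 3 * m := by linarith [mul_le_mul_of_nonneg_left P.six_mul_dim_mul_le hm_pos.le]
  have h_goal : 4 * P.κ * P.T⁻¹ ≤ 2 * m := by
    rw [← div_eq_mul_inv, div_le_iff₀ hT]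
    linarith [two_mul_κ_le hz]
  have h_sq : 0 ≤ 2 * P.α ^ 2 * (T₀ - z.1) := by positivity
  rw [weight, backwardHeat_carlemanPotential_carlemanWeight (pow_pos P.rm_pos 2) (sq_rm_lt hz)]
  linarith [neg_le_cubic_term hz ht hT₀]

end Potential

section Size

variable {P} {T₀ : ℝ} {z : Spacetime d} (hz : z.2 ∈ P.supportRegion)
include hz

lemma weight_le (ht : 0 ≤ z.1) (hT₀ : T₀ ≤ P.T) : P.weight T₀ z ≤
    P.κ * (P.rp * axialRadius P.axial z.2 / 2 + axialSq Finset.univ z.2) := by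
  rw [weight_eq hz]
  have h_le := mul_le_mul_of_nonneg_right (P.α_mul_le (by linarith : T₀ - z.1 ≤ P.T))
    (axialRadius_pos_of_mem hz).le
  linarith

/-- Off the plateau `r` is comparable to `r₋`, or `|x|` is comparable to `r₊`. -/
lemma rp_mul_axialRadius_le (h : axialSq P.axial z.2 ≤ 3 * P.rm ^ 2 ∨
      P.rp ^ 2 / 3 ≤ axialSq P.axial z.2 ∨ P.rp ^ 2 / 3 ≤ axialSq P.axialᶜ z.2) :
    P.rp * axialRadius P.axial z.2 / 2 ≤ P.rm * P.rp + axialSq Finset.univ z.2 := by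
  have hr := axialRadius_pos_of_mem hz
  have hr_sq := axialRadius_sq P.axial z.2
  have hrm := P.rm_pos
  have hrp := P.rp_pos
  have h_compl := axialSq_nonneg P.axialᶜ z.2
  rw [axialSq_univ_eq_add P.axial]
  rcases h with h | h | h
  · have : axialRadius P.axial z.2 ≤ 2 * P.rm := by nlinarith
    nlinarith
  · have : P.rp / 2 ≤ axialRadius P.axial z.2 := by nlinarith
    nlinarith [mul_pos hrm hrp]
  · nlinarith [sq_nonneg (axialRadius P.axial z.2 - P.rp / 4), mul_pos hrm hrp]

lemma weight_le_of_transition (ht : 0 ≤ z.1) (hT₀ : T₀ ≤ P.T)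
    (h : axialSq P.axial z.2 ≤ 3 * P.rm ^ 2 ∨
      P.rp ^ 2 / 3 ≤ axialSq P.axial z.2 ∨ P.rp ^ 2 / 3 ≤ axialSq P.axialᶜ z.2) :
    P.weight T₀ z ≤ P.κ * (P.rm * P.rp) + 2 * P.κ * axialSq Finset.univ z.2 := by
  linarith [weight_le hz ht hT₀,
    mul_le_mul_of_nonneg_left (rp_mul_axialRadius_le hz h) P.κ_pos.le]

lemma weight_le_three_halves (ht : 0 ≤ z.1) (hT₀ : T₀ ≤ P.T) :
    P.weight T₀ z ≤ 3 / 2 * (P.κ * P.rp ^ 2) := by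
  have hκ := P.κ_pos
  have hrp := P.rp_pos
  calc P.weight T₀ z
      ≤ P.κ * (P.rp * axialRadius P.axial z.2 / 2 + axialSq Finset.univ z.2) := weight_le hz ht hT₀
    _ ≤ P.κ * (P.rp * P.rp / 2 + P.rp ^ 2) := by
        gcongr
        exacts [axialRadius_le_rp hz, axialSq_univ_le hz]
    _ = 3 / 2 * (P.κ * P.rp ^ 2) := by ring

lemma le_weight_of_inner (h : 100 * P.rm ^ 2 ≤ axialSq P.axial z.2) (ht : z.1 ≤ P.T / 4)
    (hT₀ : P.T / 2 ≤ T₀) : 5 / 4 * (P.κ * (P.rm * P.rp)) ≤ P.weight T₀ z := by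
  have hα := P.α_pos
  have hT := P.T_pos
  have hrm := P.rm_pos
  have hκN := mul_nonneg P.κ_pos.le (axialSq_nonneg Finset.univ z.2)
  have hr : 10 * P.rm ≤ axialRadius P.axial z.2 := Real.le_sqrt_of_sq_le (by linarith)
  calc 5 / 4 * (P.κ * (P.rm * P.rp)) = P.rp * P.κ / 2 / 4 * (10 * P.rm) := by ring
    _ = P.α * (P.T / 4) * (10 * P.rm) := by rw [← P.α_mul_T]; ring
    _ ≤ P.α * (T₀ - z.1) * axialRadius P.axial z.2 := by
        have hτ : P.T / 4 ≤ T₀ - z.1 := by linarith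
        have hτ_nonneg : 0 ≤ T₀ - z.1 := by linarith
        gcongr
    _ ≤ P.weight T₀ z := by linarith [weight_eq (T₀ := T₀) hz]

lemma weight_le_two_mul_of_eq (ht : z.1 = T₀) :
    P.weight T₀ z ≤ 2 * P.κ * axialSq Finset.univ z.2 := by
  have hκN := mul_nonneg P.κ_pos.le (axialSq_nonneg Finset.univ z.2)
  rw [weight_eq hz, ht, sub_self]
  linarith

end Size

end ShellScales

namespace ShellScales

section Localization

variable {d : ℕ} (P : ShellScales d) {u w ψ : Spacetime d → ℝ} {z : Spacetime d}

/-- The closed shell `r₋ ≤ r ≤ r₊`, `|z| ≤ r₊` on which the differential inequality holds. -/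
abbrev shell : Set (EuclideanSpace ℝ (Fin d)) := shellRegion P.axial (P.rm ^ 2) (P.rp ^ 2)

/-- The shell `10 r₋ ≤ r ≤ r₊ / 2`, `|z| ≤ r₊ / 2` on which the solution is estimated. -/
abbrev innerShell : Set (EuclideanSpace ℝ (Fin d)) :=
  shellRegion P.axial (100 * P.rm ^ 2) (P.rp ^ 2 / 4)

/-- The open region on which the cutoff is identically `1`. -/
def plateau : Set (EuclideanSpace ℝ (Fin d)) :=
  {x | 3 * P.rm ^ 2 < axialSq P.axial x ∧ axialSq P.axial x < P.rp ^ 2 / 3 ∧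
    axialSq P.axialᶜ x < P.rp ^ 2 / 3}

lemma supportRegion_subset_shell : P.supportRegion ⊆ P.shell :=
  shellRegion_subset (by linarith [sq_nonneg P.rm]) (by linarith [sq_nonneg P.rp])

lemma innerShell_subset_plateau : P.innerShell ⊆ P.plateau := fun _ ⟨h₁, h₂, h₃⟩ => by
  have hrm := pow_pos P.rm_pos 2
  have := pow_pos P.rp_pos 2
  exact ⟨by linarith, by linarith, by linarith⟩

lemma plateau_subset_supportRegion : P.plateau ⊆ P.supportRegion := fun _ ⟨h₁, h₂, h₃⟩ =>
  ⟨by linarith [sq_nonneg P.rm], by linarith [sq_nonneg P.rp], by linarith [sq_nonneg P.rp]⟩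

lemma isOpen_plateau : IsOpen P.plateau := by
  have hc (R : Finset (Fin d)) : Continuous (axialSq R) := (contDiff_axialSq R (n := 0)).continuous
  exact (isOpen_lt continuous_const (hc _)).inter
    ((isOpen_lt (hc _) continuous_const).inter (isOpen_lt (hc _) continuous_const))

/-- The energy density `T⁻¹ |u|² + |∇u|²`. -/
def energy (u : Spacetime d → ℝ) (z : Spacetime d) : ℝ := P.T⁻¹ * u z ^ 2 + gradDot u u z

/-- The weighted energy density `e^{2|x|²/(C₀T)} (T⁻¹ |u|² + |∇u|²)`. -/
def weightedEnergy (u : Spacetime d → ℝ) (z : Spacetime d) : ℝ :=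
  exp (2 * P.κ * axialSq Finset.univ z.2) * P.energy u z

lemma gradDot_le_energy : gradDot u u z ≤ P.energy u z := by
  have := inv_pos.2 P.T_pos
  exact le_add_of_nonneg_left (by positivity)

lemma energy_nonneg : 0 ≤ P.energy u z := (gradDot_self_nonneg u z).trans P.gradDot_le_energy

lemma weightedEnergy_nonneg : 0 ≤ P.weightedEnergy u z := mul_nonneg (exp_pos _).le P.energy_nonneg

lemma κ_mul_sq_add_gradDot_le_energy : P.κ * u z ^ 2 + gradDot u u z ≤ P.energy u z := by
  have h_le : P.κ ≤ P.T⁻¹ := P.κ_le.trans (by linarith [inv_pos.2 P.T_pos])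
  exact add_le_add_left (mul_le_mul_of_nonneg_right h_le (sq_nonneg _)) _

lemma energy_congr (h : u =ᶠ[𝓝 z] w) : P.energy u z = P.energy w z := by
  rw [energy, h.eq_of_nhds, gradDot_congr_left h, gradDot_congr_right h, energy]

/-- A compactly supported solution of the differential inequality
`|Lu| ≤ |u| / (C₀ T) + |∇u| / (C₀ T)^{1/2}` on `[0, T] × shell`. -/
structure IsSubsolution (u : Spacetime d → ℝ) : Prop where
  contDiff : ContDiff ℝ ∞ u
  hasCompactSupport : HasCompactSupport u
  abs_backwardHeat_le : ∀ z ∈ Icc 0 P.T ×ˢ P.shell,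
    |backwardHeat u z| ≤ P.κ * |u z| + √P.κ * √(gradDot u u z)

/-- `w` is a truncation of `u` to the interior of the shell: it is what the argument retains of the
product of `u` with a cutoff. -/
structure IsTruncation (M : ℝ) (u w : Spacetime d → ℝ) : Prop where
  contDiff : ContDiff ℝ ∞ w
  hasCompactSupport : HasCompactSupport w
  mem_supportRegion : ∀ z ∈ tsupport w, z.2 ∈ P.supportRegion
  eventuallyEq : ∀ z : Spacetime d, z.2 ∈ P.plateau → w =ᶠ[𝓝 z] u
  sq_le : ∀ z, w z ^ 2 ≤ u z ^ 2
  gradDot_le : ∀ z, gradDot w w z ≤ M * P.energy u z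
  sq_backwardHeat_le : ∀ z ∈ Icc 0 P.T ×ˢ P.shell, backwardHeat w z ^ 2 ≤ M * P.κ * P.energy u z

variable {P}

lemma IsSubsolution.sq_backwardHeat_le (hu : P.IsSubsolution u)
    (hz : z ∈ Icc 0 P.T ×ˢ P.shell) : backwardHeat u z ^ 2 ≤ 2 * P.κ * P.energy u z := by
  have hκ := P.κ_pos.le
  calc backwardHeat u z ^ 2
      ≤ (P.κ * |u z| + √P.κ * √(gradDot u u z)) ^ 2 :=
        sq_le_sq' (by linarith [neg_abs_le (backwardHeat u z), hu.abs_backwardHeat_le z hz])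
          ((le_abs_self _).trans (hu.abs_backwardHeat_le z hz))
    _ ≤ 2 * ((P.κ * |u z|) ^ 2 + (√P.κ * √(gradDot u u z)) ^ 2) := add_sq_le
    _ = 2 * P.κ * (P.κ * u z ^ 2 + gradDot u u z) := by
        rw [mul_pow, mul_pow, sq_abs, sq_sqrt hκ, sq_sqrt (gradDot_self_nonneg u z)]
        ring
    _ ≤ 2 * P.κ * P.energy u z :=
        mul_le_mul_of_nonneg_left P.κ_mul_sq_add_gradDot_le_energy (by positivity)

lemma gradDot_cutoff_mul_le {K : ℝ} (hK : 0 ≤ K) (hψ : IsCutoff (K * P.κ) ψ)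
    (hu : ContDiff ℝ ∞ u) :
    gradDot (fun z => ψ z * u z) (fun z => ψ z * u z) z ≤ 2 * (1 + K) * P.energy u z := by
  have := P.κ_pos
  have h_grad := gradDot_self_nonneg u z
  have h_energy := mul_le_mul_of_nonneg_left (P.κ_mul_sq_add_gradDot_le_energy (u := u) (z := z)) hK
  calc gradDot (fun z => ψ z * u z) (fun z => ψ z * u z) z
      ≤ 2 * (ψ z ^ 2 * gradDot u u z + u z ^ 2 * gradDot ψ ψ z) :=
        gradDot_mul_self_le (hψ.differentiableAt z) (differentiableAt_of_contDiff hu)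
    _ ≤ 2 * (1 * gradDot u u z + u z ^ 2 * (K * P.κ)) := by
        gcongr
        exacts [hψ.sq_le_one z, hψ.gradDot_le z]
    _ ≤ 2 * (1 + K) * P.energy u z := by
        linarith [mul_nonneg hK h_grad, P.gradDot_le_energy (u := u) (z := z)]

lemma sq_add_two_mul_add_le (a b c : ℝ) :
    (a + 2 * b + c) ^ 2 ≤ 3 * (a ^ 2 + 4 * b ^ 2 + c ^ 2) := by
  linarith [sq_nonneg (a - 2 * b), sq_nonneg (a - c), sq_nonneg (2 * b - c)]

lemma IsSubsolution.sq_backwardHeat_cutoff_mul_le {K : ℝ} (hK : 0 ≤ K)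
    (hψ : IsCutoff (K * P.κ) ψ) (hu : P.IsSubsolution u) (hz : z ∈ Icc 0 P.T ×ˢ P.shell) :
    backwardHeat (fun z => ψ z * u z) z ^ 2 ≤ 3 * (2 + 4 * K + K ^ 2) * P.κ * P.energy u z := by
  have hκ := P.κ_pos
  have h_heat : (ψ z * backwardHeat u z) ^ 2 ≤ 2 * P.κ * P.energy u z := by
    rw [mul_pow]
    exact (mul_le_of_le_one_left (sq_nonneg _) (hψ.sq_le_one z)).trans (hu.sq_backwardHeat_le hz)
  have h_grad : gradDot ψ u z ^ 2 ≤ K * P.κ * P.energy u z :=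
    (gradDot_sq_le ψ u z).trans <|
      mul_le_mul (hψ.gradDot_le z) P.gradDot_le_energy (gradDot_self_nonneg u z) (by positivity)
  have h_lap : (u z * backwardHeat ψ z) ^ 2 ≤ K ^ 2 * P.κ * P.energy u z := by
    have h_abs : |backwardHeat ψ z| ≤ K * P.κ := by
      rw [backwardHeat, hψ.dt_eq_zero z, zero_add]
      exact hψ.abs_lap_le z
    calc (u z * backwardHeat ψ z) ^ 2 = u z ^ 2 * |backwardHeat ψ z| ^ 2 := by
          rw [mul_pow, sq_abs]
      _ ≤ u z ^ 2 * (K * P.κ) ^ 2 := by gcongr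
      _ = K ^ 2 * P.κ * (P.κ * u z ^ 2) := by ring
      _ ≤ K ^ 2 * P.κ * P.energy u z := by
          gcongr
          linarith [P.κ_mul_sq_add_gradDot_le_energy (u := u) (z := z), gradDot_self_nonneg u z]
  rw [backwardHeat_mul (hψ.contDiffAt z) (hu.contDiff.contDiffAt.of_le (by norm_cast))]
  linarith [sq_add_two_mul_add_le (ψ z * backwardHeat u z) (gradDot ψ u z)
    (u z * backwardHeat ψ z)]

theorem exists_isTruncation (d : ℕ) : ∃ M, 2 ≤ M ∧ ∀ (P : ShellScales d)
    (u : Spacetime d → ℝ), P.IsSubsolution u → ∃ w, P.IsTruncation M u w := by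
  obtain ⟨K, hK, h_cutoff⟩ := exists_isCutoff_shellCutoff d
  refine ⟨3 * (2 + 4 * K + K ^ 2), by nlinarith, fun P u hu => ?_⟩
  have hrm := pow_pos P.rm_pos 2
  have hrp := pow_pos P.rp_pos 2
  have hψ : IsCutoff (K * P.κ) (shellCutoff P.axial (P.rm ^ 2) (P.rp ^ 2)) := by
    refine (h_cutoff P.axial _ _ hrm (pow_le_pow_left₀ P.rm_pos.le P.rm_lt_rp.le 2)).mono ?_
    refine mul_le_mul_of_nonneg_left ?_ hK
    rw [inv_eq_one_div, div_le_iff₀ hrm]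
    linarith [P.four_le]
  refine ⟨fun z => shellCutoff P.axial (P.rm ^ 2) (P.rp ^ 2) z * u z,
    { contDiff := hψ.contDiff.mul hu.contDiff
      hasCompactSupport := hu.hasCompactSupport.mul_left
      mem_supportRegion := fun z hz => bounds_of_mem_tsupport_shellCutoff_mul hrm hrp hz
      eventuallyEq := fun z hz => ?_
      sq_le := fun z => ?_
      gradDot_le := fun z => ?_
      sq_backwardHeat_le := fun z => hu.sq_backwardHeat_cutoff_mul_le hK hψ }⟩
  · filter_upwards [continuous_snd.continuousAt.eventually (P.isOpen_plateau.mem_nhds hz)] with y hy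
    rw [shellCutoff_eq_one hrm hrp hy.1.le hy.2.1.le hy.2.2.le, one_mul]
  · rw [mul_pow]
    exact mul_le_of_le_one_left (sq_nonneg _) (hψ.sq_le_one z)
  · refine (gradDot_cutoff_mul_le hK hψ hu.contDiff).trans ?_
    exact mul_le_mul_of_nonneg_right (by nlinarith) P.energy_nonneg

end Localization

end ShellScales

namespace ShellScales

section PointwiseBounds

variable {d : ℕ} {P : ShellScales d} {M T₀ : ℝ} {u w : Spacetime d → ℝ} {z : Spacetime d}

lemma le_carlemanDensity_weight (hz : z.2 ∈ P.supportRegion) (ht : z.1 ∈ Icc 0 T₀)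
    (hT₀ : T₀ ≤ P.T) :
    exp (P.weight T₀ z) * (2 * P.κ * P.energy w z - 1 / 2 * backwardHeat w z ^ 2) ≤
      carlemanDensity (P.weight T₀) w z := by
  refine mul_le_mul_of_nonneg_left ?_ (exp_pos _).le
  have h_zero := mul_le_mul_of_nonneg_right
    (four_mul_κ_le_backwardHeat_carlemanPotential_weight hz ht hT₀) (sq_nonneg (w z))
  have h_hess := le_hessForm_weight hz ht.2 fun i => ∂[i] w z
  have h_grad := mul_nonneg P.κ_pos.le (gradDot_self_nonneg w z)
  rw [gradDot_self] at h_grad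
  rw [energy, gradDot_self]
  linarith

lemma IsTruncation.exp_mul_energy_le_carlemanDensity (hw : P.IsTruncation M u w)
    (hu : P.IsSubsolution u) (hz : z.2 ∈ P.plateau) (ht : z.1 ∈ Icc 0 T₀) (hT₀ : T₀ ≤ P.T) :
    exp (P.weight T₀ z) * (P.κ * P.energy u z) ≤ carlemanDensity (P.weight T₀) w z := by
  have hz' := P.plateau_subset_supportRegion hz
  refine le_trans ?_ (le_carlemanDensity_weight hz' ht hT₀)
  rw [P.energy_congr (hw.eventuallyEq z hz), backwardHeat_congr (hw.eventuallyEq z hz)]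
  gcongr
  linarith [hu.sq_backwardHeat_le ⟨⟨ht.1, ht.2.trans hT₀⟩, P.supportRegion_subset_shell hz'⟩]

lemma IsTruncation.neg_weightedEnergy_le_carlemanDensity (hw : P.IsTruncation M u w)
    (hM : 0 ≤ M) (hz : z.2 ∈ P.supportRegion) (hz' : z.2 ∉ P.plateau) (ht : z.1 ∈ Icc 0 T₀)
    (hT₀ : T₀ ≤ P.T) :
    -(M * P.κ * exp (P.κ * (P.rm * P.rp)) * P.weightedEnergy u z) ≤
      carlemanDensity (P.weight T₀) w z := by
  have hκ := P.κ_pos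
  have h_energy : 0 ≤ M * P.κ * P.energy u z := by
    have := P.energy_nonneg (u := u) (z := z)
    positivity
  have h_weight : P.weight T₀ z ≤ P.κ * (P.rm * P.rp) + 2 * P.κ * axialSq Finset.univ z.2 := by
    refine weight_le_of_transition hz ht.1 hT₀ ?_
    contrapose! hz'
    exact hz'
  have h_heat := hw.sq_backwardHeat_le z
    ⟨⟨ht.1, ht.2.trans hT₀⟩, P.supportRegion_subset_shell hz⟩
  have h_energy_w := mul_nonneg hκ.le (P.energy_nonneg (u := w) (z := z))
  calc -(M * P.κ * exp (P.κ * (P.rm * P.rp)) * P.weightedEnergy u z)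
      = -(exp (P.κ * (P.rm * P.rp) + 2 * P.κ * axialSq Finset.univ z.2) *
          (M * P.κ * P.energy u z)) := by rw [weightedEnergy, exp_add]; ring
    _ ≤ -(exp (P.weight T₀ z) * (M * P.κ * P.energy u z)) := by gcongr
    _ = exp (P.weight T₀ z) * -(M * P.κ * P.energy u z) := by ring
    _ ≤ exp (P.weight T₀ z) * (2 * P.κ * P.energy w z - 1 / 2 * backwardHeat w z ^ 2) := by
        gcongr
        linarith
    _ ≤ carlemanDensity (P.weight T₀) w z := le_carlemanDensity_weight hz ht hT₀

lemma IsTruncation.indicator_energy_le (hw : P.IsTruncation M u w) (hM : 0 ≤ M)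
    (hu : P.IsSubsolution u) (ht : z.1 ∈ Icc 0 T₀) (hT₀ : T₀ ∈ Icc (P.T / 2) P.T) :
    (Icc 0 (P.T / 4) ×ˢ P.innerShell).indicator
        (fun z => P.κ * exp (5 / 4 * (P.κ * (P.rm * P.rp))) * P.energy u z) z ≤
      carlemanDensity (P.weight T₀) w z + (Icc 0 P.T ×ˢ P.shell).indicator
        (fun z => M * P.κ * exp (P.κ * (P.rm * P.rp)) * P.weightedEnergy u z) z := by
  have hκ := P.κ_pos
  have h_energy := P.energy_nonneg (u := u) (z := z)
  have h_indicator : 0 ≤ (Icc 0 P.T ×ˢ P.shell).indicator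
      (fun z => M * P.κ * exp (P.κ * (P.rm * P.rp)) * P.weightedEnergy u z) z := by
    refine indicator_nonneg (fun z _ => ?_) z
    have := P.weightedEnergy_nonneg (u := u) (z := z)
    positivity
  by_cases hz : z.2 ∈ P.plateau
  · refine le_trans ?_ (le_add_of_nonneg_right h_indicator)
    refine le_trans ?_ (hw.exp_mul_energy_le_carlemanDensity hu hz ht hT₀.2)
    refine indicator_apply_le' (fun h_inner => ?_) fun _ => by positivity
    rw [mul_comm P.κ, mul_assoc]
    gcongr
    exact le_weight_of_inner (P.plateau_subset_supportRegion hz) h_inner.2.1 h_inner.1.2 hT₀.1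
  · rw [indicator_of_notMem fun h => hz (P.innerShell_subset_plateau h.2)]
    by_cases hz_supp : z ∈ tsupport w
    · have hz' := hw.mem_supportRegion z hz_supp
      have hz_shell : z ∈ Icc 0 P.T ×ˢ P.shell :=
        ⟨⟨ht.1, ht.2.trans hT₀.2⟩, P.supportRegion_subset_shell hz'⟩
      rw [indicator_of_mem hz_shell]
      linarith [hw.neg_weightedEnergy_le_carlemanDensity hM hz' hz ht hT₀.2]
    · rwa [carlemanDensity_eq_zero hz_supp, zero_add]

lemma IsTruncation.carlemanEnergy_final_le (hw : P.IsTruncation M u w) (hM : 0 ≤ M)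
    (x : EuclideanSpace ℝ (Fin d)) :
    carlemanEnergy (P.weight T₀) w (T₀, x) ≤
      P.shell.indicator (fun x => M * P.weightedEnergy u (T₀, x)) x := by
  have h_energy (x) : 0 ≤ M * P.energy u (T₀, x) := mul_nonneg hM P.energy_nonneg
  by_cases hx_supp : (T₀, x) ∈ tsupport w
  · have hx : x ∈ P.supportRegion := hw.mem_supportRegion _ hx_supp
    have h_potential := mul_nonpos_of_nonpos_of_nonneg
      (carlemanPotential_weight_nonpos (z := (T₀, x)) hx le_rfl) (sq_nonneg (w (T₀, x)))
    rw [indicator_of_mem (P.supportRegion_subset_shell hx)]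
    calc carlemanEnergy (P.weight T₀) w (T₀, x)
        ≤ exp (P.weight T₀ (T₀, x)) * (M * P.energy u (T₀, x)) := by
          refine mul_le_mul_of_nonneg_left ?_ (exp_pos _).le
          linarith [hw.gradDot_le (T₀, x)]
      _ ≤ exp (2 * P.κ * axialSq Finset.univ x) * (M * P.energy u (T₀, x)) :=
          mul_le_mul_of_nonneg_right (exp_le_exp.2 (weight_le_two_mul_of_eq hx rfl)) (h_energy x)
      _ = M * P.weightedEnergy u (T₀, x) := by rw [weightedEnergy]; ring
  · rw [carlemanEnergy_eq_zero hx_supp]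
    exact indicator_nonneg (fun x _ => mul_nonneg hM P.weightedEnergy_nonneg) x

lemma IsTruncation.neg_carlemanEnergy_initial_le (hw : P.IsTruncation M u w) (hM : 2 ≤ M)
    (hT₀ : T₀ ∈ Icc 0 P.T) (x : EuclideanSpace ℝ (Fin d)) :
    -carlemanEnergy (P.weight T₀) w (0, x) ≤ P.shell.indicator
      (fun x => M * P.T⁻¹ * exp (2 * (P.κ * P.rp ^ 2)) * u (0, x) ^ 2) x := by
  have hT := inv_pos.2 P.T_pos
  set S := P.κ * P.rp ^ 2
  by_cases hx_supp : (0, x) ∈ tsupport w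
  · have hx : x ∈ P.supportRegion := hw.mem_supportRegion _ hx_supp
    have h_potential : -carlemanPotential (P.weight T₀) (0, x) ≤ 2 * P.T⁻¹ * (1 + S) :=
      neg_carlemanPotential_weight_le hx ⟨le_rfl, hT₀.1⟩ hT₀.2
    have h_exp : 1 + S ≤ 2 * exp (S / 2) := by linarith [add_one_le_exp (S / 2)]
    rw [indicator_of_mem (P.supportRegion_subset_shell hx)]
    calc -carlemanEnergy (P.weight T₀) w (0, x)
        ≤ exp (P.weight T₀ (0, x)) *
            (1 / 2 * (-carlemanPotential (P.weight T₀) (0, x) * w (0, x) ^ 2)) := by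
          rw [carlemanEnergy, ← mul_neg]
          refine mul_le_mul_of_nonneg_left ?_ (exp_pos _).le
          linarith [gradDot_self_nonneg w (0, x)]
      _ ≤ exp (3 / 2 * S) * (1 / 2 * (2 * P.T⁻¹ * (2 * exp (S / 2)) * u (0, x) ^ 2)) := by
          have h_neg := neg_nonneg.2 (carlemanPotential_weight_nonpos (z := (0, x)) hx hT₀.1)
          have h_le := h_potential.trans (mul_le_mul_of_nonneg_left h_exp (by positivity))
          have h_prod := mul_le_mul h_le (hw.sq_le (0, x)) (sq_nonneg _) (by positivity)
          gcongr
          exact weight_le_three_halves hx le_rfl hT₀.2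
      _ = 2 * P.T⁻¹ * (exp (3 / 2 * S) * exp (S / 2)) * u (0, x) ^ 2 := by ring
      _ = 2 * P.T⁻¹ * exp (2 * S) * u (0, x) ^ 2 := by rw [← exp_add]; ring_nf
      _ ≤ M * P.T⁻¹ * exp (2 * S) * u (0, x) ^ 2 := by gcongr
  · rw [carlemanEnergy_eq_zero hx_supp, neg_zero]
    refine indicator_nonneg (fun x _ => ?_) x
    positivity

end PointwiseBounds

end ShellScales

section IntegrationOnSlabs

variable {d : ℕ} {f : Spacetime d → ℝ} {B : Set (EuclideanSpace ℝ (Fin d))}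

lemma integrableOn_Icc_prod (hf : Continuous f) (hB : IsCompact B) (a b : ℝ) :
    IntegrableOn f (Icc a b ×ˢ B) :=
  hf.continuousOn.integrableOn_compact (isCompact_Icc.prod hB)

lemma setIntegral_Icc_prod (hf : Continuous f) (hB : IsCompact B) (a b : ℝ) :
    ∫ z in Icc a b ×ˢ B, f z = ∫ t in Icc a b, ∫ x in B, f (t, x) :=
  setIntegral_prod f (integrableOn_Icc_prod hf hB a b)

lemma setIntegral_indicator_const_mul_le {X : Type*} [MeasurableSpace X] {μ : Measure X} {h : X → ℝ}
    {A : Set X} {c : ℝ} (hA : MeasurableSet A) (hc : 0 ≤ c) (hh : ∀ x, 0 ≤ h x)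
    (h_int : Integrable (A.indicator fun x => c * h x) μ) (E : Set X) :
    ∫ x in E, A.indicator (fun x => c * h x) x ∂μ ≤ c * ∫ x in A, h x ∂μ := by
  rw [← integral_const_mul, ← integral_indicator hA]
  exact setIntegral_le_integral h_int
    (ae_of_all _ fun _ => indicator_nonneg (fun x _ => mul_nonneg hc (hh x)) _)

lemma integrable_indicator_Icc_prod (hf : Continuous f) (hB : IsCompact B) (a b : ℝ) :
    Integrable ((Icc a b ×ˢ B).indicator f) :=
  (integrable_indicator_iff (measurableSet_Icc.prod hB.measurableSet)).2
    (integrableOn_Icc_prod hf hB a b)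

lemma exists_setIntegral_slice_le {T : ℝ} (hT : 0 < T) (hf : Continuous f)
    (hf_nonneg : ∀ z, 0 ≤ f z) (hB : IsCompact B) : ∃ T₀ ∈ Icc (T / 2) T,
      ∫ x in B, f (T₀, x) ≤ 2 * T⁻¹ * ∫ z in Icc 0 T ×ˢ B, f z := by
  have h_vol : volume (Icc (T / 2) T) = ENNReal.ofReal (T / 2) := by
    rw [Real.volume_Icc, sub_half]
  have h_slices : IntegrableOn (fun t => ∫ x in B, f (t, x)) (Icc (T / 2) T) := by
    have h := integrableOn_Icc_prod hf hB (T / 2) T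
    rw [IntegrableOn, Measure.volume_eq_prod, ← Measure.prod_restrict] at h
    exact h.integral_prod_left
  obtain ⟨T₀, hT₀, h_le⟩ := exists_le_setAverage (by simpa [h_vol] using hT)
    (by simp [h_vol]) h_slices
  refine ⟨T₀, hT₀, h_le.trans ?_⟩
  have h_inv : (volume.real (Icc (T / 2) T))⁻¹ = 2 * T⁻¹ := by
    rw [measureReal_def, h_vol, ENNReal.toReal_ofReal (by linarith), inv_div, div_eq_mul_inv]
  rw [setAverage_eq, ← setIntegral_Icc_prod hf hB, smul_eq_mul, h_inv]
  refine mul_le_mul_of_nonneg_left ?_ (by positivity)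
  exact setIntegral_mono_set (integrableOn_Icc_prod hf hB 0 T) (ae_of_all _ hf_nonneg)
    (prod_mono (Icc_subset_Icc_left (by linarith)) Subset.rfl).eventuallyLE

end IntegrationOnSlabs

namespace ShellScales

section Integrals

variable {d : ℕ} (P : ShellScales d) {M T₀ : ℝ} {u w : Spacetime d → ℝ}

lemma continuous_energy (hu : ContDiff ℝ ∞ u) : Continuous (P.energy u) :=
  (continuous_const.mul (hu.continuous.pow 2)).add (contDiff_gradDot hu hu).continuous

lemma continuous_weightedEnergy (hu : ContDiff ℝ ∞ u) : Continuous (P.weightedEnergy u) := by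
  have h_energy := P.continuous_energy hu
  have h_sq := (contDiff_axialSq (Finset.univ : Finset (Fin d)) (n := 0)).continuous
  unfold weightedEnergy
  fun_prop

lemma contDiff_weight (T₀ : ℝ) : ContDiff ℝ ∞ (P.weight T₀) :=
  contDiff_carlemanWeight _ _ _ _ (pow_pos P.rm_pos 2)

lemma measurableSet_shell : MeasurableSet P.shell := (isClosed_shellRegion _ _ _).measurableSet

lemma measurableSet_innerShell : MeasurableSet P.innerShell :=
  (isClosed_shellRegion _ _ _).measurableSet

variable {P}

lemma IsTruncation.integrable_carlemanDensity (hw : P.IsTruncation M u w) :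
    Integrable (carlemanDensity (P.weight T₀) w) :=
  (contDiff_carlemanDensity (P.contDiff_weight T₀) hw.contDiff).continuous
    |>.integrable_of_hasCompactSupport (hasCompactSupport_carlemanDensity hw.hasCompactSupport)

lemma IsTruncation.integrable_carlemanEnergy (hw : P.IsTruncation M u w) (t : ℝ) :
    Integrable fun x => carlemanEnergy (P.weight T₀) w (t, x) :=
  integrable_slice (contDiff_carlemanEnergy (P.contDiff_weight T₀) hw.contDiff).continuous
    (hasCompactSupport_carlemanEnergy hw.hasCompactSupport) t

lemma integrable_indicator_shell {f : EuclideanSpace ℝ (Fin d) → ℝ} (hf : Continuous f) :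
    Integrable (P.shell.indicator f) :=
  (integrable_indicator_iff P.measurableSet_shell).2
    (hf.continuousOn.integrableOn_compact (isCompact_shellRegion _ _ _))

lemma IsTruncation.integral_innerShell_le (hw : P.IsTruncation M u w) (hM : 0 ≤ M)
    (hu : P.IsSubsolution u) (hT₀ : T₀ ∈ Icc (P.T / 2) P.T) :
    P.κ * exp (5 / 4 * (P.κ * (P.rm * P.rp))) *
        ∫ z in Icc 0 (P.T / 4) ×ˢ P.innerShell, P.energy u z ≤
      (∫ z in Icc 0 T₀ ×ˢ univ, carlemanDensity (P.weight T₀) w z) +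
        M * P.κ * exp (P.κ * (P.rm * P.rp)) *
          ∫ z in Icc 0 P.T ×ˢ P.shell, P.weightedEnergy u z := by
  have hκ := P.κ_pos
  have h_inner_meas : MeasurableSet (Icc 0 (P.T / 4) ×ˢ P.innerShell) :=
    measurableSet_Icc.prod P.measurableSet_innerShell
  have h_shell_meas : MeasurableSet (Icc 0 P.T ×ˢ P.shell) :=
    measurableSet_Icc.prod P.measurableSet_shell
  have h_inner_int := integrable_indicator_Icc_prod
    ((P.continuous_energy hu.contDiff).const_mul (P.κ * exp (5 / 4 * (P.κ * (P.rm * P.rp)))))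
    (isCompact_shellRegion P.axial (100 * P.rm ^ 2) (P.rp ^ 2 / 4)) 0 (P.T / 4)
  have h_shell_int := integrable_indicator_Icc_prod
    ((P.continuous_weightedEnergy hu.contDiff).const_mul
      (M * P.κ * exp (P.κ * (P.rm * P.rp))))
    (isCompact_shellRegion P.axial (P.rm ^ 2) (P.rp ^ 2)) 0 P.T
  have h_density_int := hw.integrable_carlemanDensity (T₀ := T₀)
  have h_slab : Icc 0 (P.T / 4) ×ˢ P.innerShell ⊆ Icc 0 T₀ ×ˢ univ :=
    prod_mono (Icc_subset_Icc_right (by linarith [hT₀.1, P.T_pos])) (subset_univ _)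
  calc P.κ * exp (5 / 4 * (P.κ * (P.rm * P.rp))) *
        ∫ z in Icc 0 (P.T / 4) ×ˢ P.innerShell, P.energy u z
      = ∫ z in Icc 0 T₀ ×ˢ univ, (Icc 0 (P.T / 4) ×ˢ P.innerShell).indicator
          (fun z => P.κ * exp (5 / 4 * (P.κ * (P.rm * P.rp))) * P.energy u z) z := by
        rw [setIntegral_indicator h_inner_meas, inter_eq_self_of_subset_right h_slab,
          integral_const_mul]
    _ ≤ ∫ z in Icc 0 T₀ ×ˢ univ, (carlemanDensity (P.weight T₀) w z +
          (Icc 0 P.T ×ˢ P.shell).indicator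
            (fun z => M * P.κ * exp (P.κ * (P.rm * P.rp)) * P.weightedEnergy u z) z) :=
        setIntegral_mono_on h_inner_int.integrableOn (h_density_int.add h_shell_int).integrableOn
          (measurableSet_Icc.prod .univ) fun z hz => hw.indicator_energy_le hM hu hz.1 hT₀
    _ = (∫ z in Icc 0 T₀ ×ˢ univ, carlemanDensity (P.weight T₀) w z) +
          ∫ z in Icc 0 T₀ ×ˢ univ, (Icc 0 P.T ×ˢ P.shell).indicator
            (fun z => M * P.κ * exp (P.κ * (P.rm * P.rp)) * P.weightedEnergy u z) z :=
        integral_add h_density_int.integrableOn h_shell_int.integrableOn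
    _ ≤ _ := add_le_add_right (setIntegral_indicator_const_mul_le h_shell_meas (by positivity)
        (fun _ => P.weightedEnergy_nonneg) h_shell_int _) _

lemma IsTruncation.integral_carlemanEnergy_final_le (hw : P.IsTruncation M u w) (hM : 0 ≤ M)
    (hu : P.IsSubsolution u) :
    ∫ x, carlemanEnergy (P.weight T₀) w (T₀, x) ≤
      M * ∫ x in P.shell, P.weightedEnergy u (T₀, x) := by
  rw [← integral_const_mul, ← integral_indicator P.measurableSet_shell]
  have h_cont := P.continuous_weightedEnergy hu.contDiff
  exact integral_mono (hw.integrable_carlemanEnergy T₀) (integrable_indicator_shell (by fun_prop))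
    (hw.carlemanEnergy_final_le hM)

lemma IsTruncation.neg_integral_carlemanEnergy_initial_le (hw : P.IsTruncation M u w)
    (hM : 2 ≤ M) (hu : P.IsSubsolution u) (hT₀ : T₀ ∈ Icc 0 P.T) :
    -∫ x, carlemanEnergy (P.weight T₀) w (0, x) ≤
      M * P.T⁻¹ * exp (2 * (P.κ * P.rp ^ 2)) * ∫ x in P.shell, u (0, x) ^ 2 := by
  rw [← integral_const_mul, ← integral_indicator P.measurableSet_shell, ← integral_neg]
  have h_cont := hu.contDiff.continuous
  exact integral_mono (hw.integrable_carlemanEnergy 0).neg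
    (integrable_indicator_shell (by fun_prop)) (hw.neg_carlemanEnergy_initial_le hM hT₀)

lemma le_of_exp_mul_le (P : ShellScales d) {c s J X Y : ℝ} (hc : 0 < c) (hs : 0 ≤ s)
    (hX : 0 ≤ X) (hY : 0 ≤ Y) (h : P.κ * exp (5 / 4 * s) * J ≤
      c * P.κ * exp s * X + c * (2 * P.T⁻¹ * X) + c * P.T⁻¹ * Y) :
    J ≤ 3 * c * (P.κ * P.T)⁻¹ * exp (-s / 4) * (X + Y) := by
  have hκ := P.κ_pos
  have hT := P.T_pos
  have h_exp : exp (5 / 4 * s) = exp s * exp (s / 4) := by rw [← exp_add]; ring_nf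
  have h_one : 1 ≤ exp s := one_le_exp hs
  have hκ_le : P.κ ≤ P.T⁻¹ := P.κ_le.trans (by linarith [inv_pos.2 hT])
  have h_bound : P.κ * exp s * exp (s / 4) * J ≤ 3 * c * P.T⁻¹ * exp s * (X + Y) := by
    calc P.κ * exp s * exp (s / 4) * J = P.κ * exp (5 / 4 * s) * J := by rw [h_exp]; ring
      _ ≤ c * P.κ * exp s * X + c * (2 * P.T⁻¹ * X) * 1 + c * P.T⁻¹ * Y * 1 := by linarith
      _ ≤ c * P.T⁻¹ * exp s * X + c * (2 * P.T⁻¹ * X) * exp s + c * P.T⁻¹ * Y * exp s := by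
          gcongr
      _ ≤ 3 * c * P.T⁻¹ * exp s * (X + Y) := by
          have : 0 ≤ c * P.T⁻¹ * exp s * Y := by positivity
          linarith
  have h_main := (le_div_iff₀' (by positivity)).2 h_bound
  refine h_main.trans_eq ?_
  rw [neg_div, exp_neg]
  field_simp

end Integrals

theorem exists_forall_integral_energy_le (d : ℕ) :
    ∃ M : ℝ, 2 ≤ M ∧ ∀ (P : ShellScales d) (u : Spacetime d → ℝ), P.IsSubsolution u →
      ∫ z in Icc 0 (P.T / 4) ×ˢ P.innerShell, P.energy u z ≤
        3 * M * (P.κ * P.T)⁻¹ * exp (-(P.κ * (P.rm * P.rp)) / 4) *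
          ((∫ z in Icc 0 P.T ×ˢ P.shell, P.weightedEnergy u z) +
            exp (2 * (P.κ * P.rp ^ 2)) * ∫ x in P.shell, u (0, x) ^ 2) := by
  obtain ⟨M, hM, h_truncate⟩ := exists_isTruncation d
  refine ⟨M, hM, fun P u hu => ?_⟩
  have hM' : 0 < M := two_pos.trans_le hM
  obtain ⟨w, hw⟩ := h_truncate P u hu
  obtain ⟨T₀, hT₀, h_slice⟩ := exists_setIntegral_slice_le P.T_pos
    (P.continuous_weightedEnergy hu.contDiff) (fun _ => P.weightedEnergy_nonneg)
    (isCompact_shellRegion P.axial (P.rm ^ 2) (P.rp ^ 2))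
  have hT₀_nonneg : 0 ≤ T₀ := (half_pos P.T_pos).le.trans hT₀.1
  have h_carleman := carleman_inequality (P.contDiff_weight T₀) hw.contDiff
    hw.hasCompactSupport hT₀_nonneg
  have h_inner := hw.integral_innerShell_le hM'.le hu hT₀
  have h_final := (hw.integral_carlemanEnergy_final_le hM'.le hu).trans
    (mul_le_mul_of_nonneg_left h_slice hM'.le)
  have h_initial := hw.neg_integral_carlemanEnergy_initial_le hM hu ⟨hT₀_nonneg, hT₀.2⟩
  have h_nonneg : 0 ≤ P.κ * (P.rm * P.rp) :=
    (mul_pos P.κ_pos (mul_pos P.rm_pos P.rp_pos)).le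
  refine P.le_of_exp_mul_le hM' h_nonneg (integral_nonneg fun _ => P.weightedEnergy_nonneg)
    (mul_nonneg (exp_pos _).le (integral_nonneg fun _ => sq_nonneg _)) ?_
  linarith

end ShellScales

theorem exists_contDiff_hasCompactSupport_eventuallyEq {H : Type*} [NormedAddCommGroup H]
    [NormedSpace ℝ H] [FiniteDimensional ℝ H] {K U : Set H} (hK : IsCompact K) (hU : IsOpen U)
    (hKU : K ⊆ U) {f : H → ℝ} (hf : ContDiffOn ℝ ∞ f U) :
    ∃ v : H → ℝ, ContDiff ℝ ∞ v ∧ HasCompactSupport v ∧ ∀ z ∈ K, f =ᶠ[𝓝 z] v := by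
  have : ProperSpace H := FiniteDimensional.proper ℝ H
  obtain ⟨B, hB, hKB, hBU⟩ := exists_compact_between hK hU hKU
  obtain ⟨χ, hχ_one, hχ_zero, -⟩ := exists_contMDiffMap_one_nhds_of_subset_interior
    (n := (⊤ : ℕ∞)) (modelWithCornersSelf ℝ H) hK.isClosed hKB
  have hχ : ContDiff ℝ ∞ χ := χ.contMDiff.contDiff
  refine ⟨fun z => χ z * f z, contDiff_iff_contDiffAt.2 fun z => ?_,
    HasCompactSupport.intro hB fun z hz => by rw [hχ_zero z hz, zero_mul], fun z hz => ?_⟩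
  · by_cases hz : z ∈ U
    · exact hχ.contDiffAt.mul (hf.contDiffAt (hU.mem_nhds hz))
    · have h_zero : (fun z => χ z * f z) =ᶠ[𝓝 z] fun _ => 0 := by
        filter_upwards [hB.isClosed.isOpen_compl.mem_nhds fun h => hz (hBU h)] with y hy
        rw [hχ_zero y hy, zero_mul]
      exact contDiffAt_const.congr_of_eventuallyEq h_zero
  · filter_upwards [hχ_one.filter_mono (nhds_le_nhdsSet hz)] with y hy
    rw [hy, one_mul]

section CoordinateOperators

variable {d : ℕ} {u : ℝ → EuclideanSpace ℝ (Fin d) → ℝ} {v : Spacetime d → ℝ} {t : ℝ}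
  {x : EuclideanSpace ℝ (Fin d)}

lemma pdg_eq_dirDeriv (hv : ContDiff ℝ ∞ v) (h : (fun z => u z.1 z.2) =ᶠ[𝓝 (t, x)] v)
    (i : Fin d) : pdg i (u t) x = ∂[i] v (t, x) := by
  have hd : DifferentiableAt ℝ (fun z : Spacetime d => u z.1 z.2) (t, x) :=
    (differentiableAt_of_contDiff hv).congr_of_eventuallyEq h
  exact (pdg_slice hd i).trans (dirDeriv_congr h _)

lemma sum_sq_pdg_eq_gradDot (hv : ContDiff ℝ ∞ v) (h : (fun z => u z.1 z.2) =ᶠ[𝓝 (t, x)] v) :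
    ∑ i, pdg i (u t) x ^ 2 = gradDot v v (t, x) := by
  simp only [gradDot_self, pdg_eq_dirDeriv hv h]

lemma lapg_eq_lap (hv : ContDiff ℝ ∞ v) (h : (fun z => u z.1 z.2) =ᶠ[𝓝 (t, x)] v) :
    lapg (u t) x = lap v (t, x) := by
  refine Finset.sum_congr rfl fun i _ => ?_
  have h_slice : pdg i (u t) =ᶠ[𝓝 x] fun y => ∂[i] v (t, y) := by
    have hc : ContinuousAt (fun y : EuclideanSpace ℝ (Fin d) => (t, y)) x := by fun_prop
    filter_upwards [hc.eventually h.eventuallyEq_nhds] with y hy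
    exact pdg_eq_dirDeriv hv hy i
  exact (dirDeriv_congr h_slice _).trans (pdg_slice (z := (t, x)) (by fun_prop) i)

lemma bheat_eq_backwardHeat (hv : ContDiff ℝ ∞ v) (h : (fun z => u z.1 z.2) =ᶠ[𝓝 (t, x)] v) :
    bheat u t x = backwardHeat v (t, x) := by
  have hd : DifferentiableAt ℝ (fun z : Spacetime d => u z.1 z.2) (t, x) :=
    (differentiableAt_of_contDiff hv).congr_of_eventuallyEq h
  rw [bheat, backwardHeat, lapg_eq_lap hv h, tdg, (hasDerivAt_slice hd).deriv, dirDeriv_congr h]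

end CoordinateOperators

namespace ShellScales

section CoordinateEstimate

variable {d : ℕ} (P : ShellScales d) {u : ℝ → EuclideanSpace ℝ (Fin d) → ℝ}
  {v : Spacetime d → ℝ}

lemma innerShell_subset_shell : P.innerShell ⊆ P.shell :=
  P.innerShell_subset_plateau.trans <|
    P.plateau_subset_supportRegion.trans P.supportRegion_subset_shell

variable {P}

lemma coordinate_energy_eq {t : ℝ} {x : EuclideanSpace ℝ (Fin d)} (hv : ContDiff ℝ ∞ v)
    (h : (fun z => u z.1 z.2) =ᶠ[𝓝 (t, x)] v) :
    P.T⁻¹ * u t x ^ 2 + ∑ i, pdg i (u t) x ^ 2 = P.energy v (t, x) := by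
  rw [sum_sq_pdg_eq_gradDot hv h, energy, ← h.eq_of_nhds]

lemma isSubsolution_of_eventuallyEq (hv : ContDiff ℝ ∞ v) (hvc : HasCompactSupport v)
    (h : ∀ z ∈ Icc 0 P.T ×ˢ P.shell, (fun z => u z.1 z.2) =ᶠ[𝓝 z] v)
    (hu : ∀ t ∈ Icc 0 P.T, ∀ x ∈ P.shell,
      |bheat u t x| ≤ P.κ * |u t x| + √P.κ * √(∑ i, pdg i (u t) x ^ 2)) :
    P.IsSubsolution v := by
  refine ⟨hv, hvc, fun z hz => ?_⟩
  rw [← bheat_eq_backwardHeat hv (h z hz), ← sum_sq_pdg_eq_gradDot hv (h z hz),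
    ← (h z hz).eq_of_nhds]
  exact hu z.1 hz.1 z.2 hz.2

theorem exists_forall_iterated_integral_energy_le (d : ℕ) :
    ∃ M : ℝ, 2 ≤ M ∧ ∀ (P : ShellScales d) (u : ℝ → EuclideanSpace ℝ (Fin d) → ℝ)
      (U : Set (Spacetime d)), IsOpen U → Icc 0 P.T ×ˢ P.shell ⊆ U →
      ContDiffOn ℝ ∞ (fun z => u z.1 z.2) U →
      (∀ t ∈ Icc 0 P.T, ∀ x ∈ P.shell,
        |bheat u t x| ≤ P.κ * |u t x| + √P.κ * √(∑ i, pdg i (u t) x ^ 2)) →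
      ∫ t in Icc 0 (P.T / 4), ∫ x in P.innerShell,
          (P.T⁻¹ * u t x ^ 2 + ∑ i, pdg i (u t) x ^ 2) ≤
        3 * M * (P.κ * P.T)⁻¹ * exp (-(P.κ * (P.rm * P.rp)) / 4) *
          ((∫ t in Icc 0 P.T, ∫ x in P.shell,
              exp (2 * P.κ * ‖x‖ ^ 2) * (P.T⁻¹ * u t x ^ 2 + ∑ i, pdg i (u t) x ^ 2)) +
            exp (2 * P.κ * P.rp ^ 2) * ∫ x in P.shell, u 0 x ^ 2) := by
  obtain ⟨M, hM, h_main⟩ := exists_forall_integral_energy_le d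
  refine ⟨M, hM, fun P u U hU hKU hu h_ineq => ?_⟩
  have h_compact : IsCompact P.shell := isCompact_shellRegion _ _ _
  obtain ⟨v, hv, hvc, h_eq⟩ :=
    exists_contDiff_hasCompactSupport_eventuallyEq (isCompact_Icc.prod h_compact) hU hKU hu
  have h_inner : ∫ t in Icc 0 (P.T / 4), ∫ x in P.innerShell,
      (P.T⁻¹ * u t x ^ 2 + ∑ i, pdg i (u t) x ^ 2) =
        ∫ z in Icc 0 (P.T / 4) ×ˢ P.innerShell, P.energy v z := by
    rw [setIntegral_Icc_prod (P.continuous_energy hv) (isCompact_shellRegion _ _ _)]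
    refine setIntegral_congr_fun measurableSet_Icc fun t ht =>
      setIntegral_congr_fun P.measurableSet_innerShell fun x hx => coordinate_energy_eq hv ?_
    exact h_eq _ ⟨⟨ht.1, ht.2.trans (by linarith [P.T_pos])⟩, P.innerShell_subset_shell hx⟩
  have h_shell : ∫ t in Icc 0 P.T, ∫ x in P.shell,
      exp (2 * P.κ * ‖x‖ ^ 2) * (P.T⁻¹ * u t x ^ 2 + ∑ i, pdg i (u t) x ^ 2) =
        ∫ z in Icc 0 P.T ×ˢ P.shell, P.weightedEnergy v z := by
    rw [setIntegral_Icc_prod (P.continuous_weightedEnergy hv) h_compact]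
    refine setIntegral_congr_fun measurableSet_Icc fun t ht =>
      setIntegral_congr_fun P.measurableSet_shell fun x hx => ?_
    simp only [coordinate_energy_eq hv (h_eq (t, x) ⟨ht, hx⟩), weightedEnergy, axialSq_univ]
  have h_initial : ∫ x in P.shell, u 0 x ^ 2 = ∫ x in P.shell, v (0, x) ^ 2 :=
    setIntegral_congr_fun P.measurableSet_shell fun x hx =>
      congrArg (· ^ 2) (h_eq (0, x) ⟨⟨le_rfl, P.T_pos.le⟩, hx⟩).eq_of_nhds
  rw [h_inner, h_shell, h_initial, mul_assoc 2]
  exact h_main P v (isSubsolution_of_eventuallyEq hv hvc h_eq h_ineq)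

end CoordinateEstimate

end ShellScales

section Cylinder

variable {d₁ d₂ : ℕ}

/-- The coordinates `x₁, …, x_{d₁}` of `ℝ^{d₁+d₂}` measured by `r`. -/
def axialCoords (d₁ d₂ : ℕ) : Finset (Fin (d₁ + d₂)) :=
  Finset.univ.filter fun i => (i : ℕ) < d₁

lemma radP_eq_axialRadius (x : EuclideanSpace ℝ (Fin (d₁ + d₂))) :
    radP d₁ d₂ x = axialRadius (axialCoords d₁ d₂) x := by
  rw [radP, axialRadius, axialSq, axialCoords, Finset.sum_filter]

lemma zradP_eq_axialRadius_compl (x : EuclideanSpace ℝ (Fin (d₁ + d₂))) :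
    zradP d₁ d₂ x = axialRadius (axialCoords d₁ d₂)ᶜ x := by
  simp only [zradP, axialRadius, axialSq, axialCoords, Finset.compl_filter, Finset.sum_filter,
    ite_not]

lemma shellRegion_axialCoords {a b : ℝ} (ha : 0 < a) (hb : 0 ≤ b) :
    shellRegion (axialCoords d₁ d₂) (a ^ 2) (b ^ 2) =
      {x | a ≤ radP d₁ d₂ x ∧ radP d₁ d₂ x ≤ b ∧ zradP d₁ d₂ x ≤ b} := by
  ext x
  simp only [shellRegion, radP_eq_axialRadius, zradP_eq_axialRadius_compl, axialRadius,
    mem_ofPred_eq, Real.le_sqrt' ha, Real.sqrt_le_iff, hb, true_and]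

namespace ShellScales

variable {C₀ T rm rp : ℝ} (hd₁ : 1 ≤ d₁) (hC₀ : 6 * ((d₁ + d₂ : ℕ) : ℝ) ≤ C₀) (hT : 0 < T)
  (hrm : 0 < rm) (h_lt : rm < rp) (h_four : 4 * C₀ * T ≤ rm ^ 2)

/-- The scales of a shell around the subspace `r = 0` of `ℝ^{d₁+d₂}`, with `κ = 1 / (C₀ T)`. -/
def ofCylinder : ShellScales (d₁ + d₂) :=
  have hC₀_pos : 0 < C₀ := lt_of_lt_of_le (by positivity) hC₀
  { axial := axialCoords d₁ d₂
    T := T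
    κ := (C₀ * T)⁻¹
    rm := rm
    rp := rp
    axial_nonempty := ⟨⟨0, by omega⟩, by simpa [axialCoords] using Nat.pos_of_ne_zero (by omega)⟩
    T_pos := hT
    κ_pos := by positivity
    rm_pos := hrm
    rm_lt_rp := h_lt
    six_mul_dim_mul_le := by
      field_simp
      exact hC₀
    four_le := by
      rw [inv_mul_eq_div, le_div_iff₀ (by positivity), ← mul_assoc]
      exact h_four }

lemma shell_ofCylinder : (ofCylinder hd₁ hC₀ hT hrm h_lt h_four).shell =
    {x | radP d₁ d₂ x ∈ Icc rm rp ∧ zradP d₁ d₂ x ≤ rp} := by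
  simp only [mem_Icc, and_assoc]
  exact shellRegion_axialCoords hrm (hrm.trans h_lt).le

lemma innerShell_ofCylinder : (ofCylinder hd₁ hC₀ hT hrm h_lt h_four).innerShell =
    {x | 10 * rm ≤ radP d₁ d₂ x ∧ radP d₁ d₂ x ≤ rp / 2 ∧ zradP d₁ d₂ x ≤ rp / 2} := by
  have hrp := hrm.trans h_lt
  rw [← shellRegion_axialCoords (by positivity) (by positivity), mul_pow, div_pow]
  norm_num [innerShell, ofCylinder]

end ShellScales

end Cylinder

/-- Backward uniqueness Carleman estimate in a cylindrical shell. -/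
theorem statement16 (d₁ d₂ : ℕ) (hd₁ : 1 ≤ d₁) :
    ∃ C₀star C : ℝ, 1 ≤ C₀star ∧ 1 ≤ C ∧
      ∀ C₀ : ℝ, C₀star ≤ C₀ →
      ∀ (T rm rp : ℝ) (u : ℝ → EuclideanSpace ℝ (Fin (d₁ + d₂)) → ℝ),
        0 < T → 0 < rm → rm < rp →
        (∃ U : Set (ℝ × EuclideanSpace ℝ (Fin (d₁ + d₂))), IsOpen U ∧
          {z : ℝ × EuclideanSpace ℝ (Fin (d₁ + d₂)) |
              z.1 ∈ Icc 0 T ∧ radP d₁ d₂ z.2 ∈ Icc rm rp ∧ zradP d₁ d₂ z.2 ≤ rp} ⊆ U ∧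
          ContDiffOn ℝ (⊤ : ℕ∞) (fun z => u z.1 z.2) U) →
        (∀ t ∈ Icc (0:ℝ) T, ∀ x, radP d₁ d₂ x ∈ Icc rm rp → zradP d₁ d₂ x ≤ rp →
          |bheat u t x| ≤ (C₀ * T)⁻¹ * |u t x|
            + ((C₀ * T) ^ ((1:ℝ)/2))⁻¹ * Real.sqrt (∑ i, (pdg i (u t) x) ^ 2)) →
        4 * C₀ * T ≤ rm ^ 2 →
        (∫ t in Icc 0 (T/4),
            ∫ x in {x | 10 * rm ≤ radP d₁ d₂ x ∧ radP d₁ d₂ x ≤ rp/2 ∧ zradP d₁ d₂ x ≤ rp/2},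
              (T⁻¹ * (u t x) ^ 2 + ∑ i, (pdg i (u t) x) ^ 2))
          ≤ C * C₀ * Real.exp (-(rm * rp) / (4 * C₀ * T)) *
            ((∫ t in Icc (0:ℝ) T,
                ∫ x in {x | radP d₁ d₂ x ∈ Icc rm rp ∧ zradP d₁ d₂ x ≤ rp},
                  Real.exp (2 * ‖x‖ ^ 2 / (C₀ * T)) *
                    (T⁻¹ * (u t x) ^ 2 + ∑ i, (pdg i (u t) x) ^ 2))
              + Real.exp (2 * rp ^ 2 / (C₀ * T)) *
                (∫ x in {x | radP d₁ d₂ x ∈ Icc rm rp ∧ zradP d₁ d₂ x ≤ rp},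
                  (u 0 x) ^ 2)) := by
  obtain ⟨M, hM, h_main⟩ := ShellScales.exists_forall_iterated_integral_energy_le (d₁ + d₂)
  have hd : (1 : ℝ) ≤ (d₁ + d₂ : ℕ) := by exact_mod_cast hd₁.trans (Nat.le_add_right d₁ d₂)
  refine ⟨6 * ((d₁ + d₂ : ℕ) : ℝ), 3 * M, by linarith, by linarith, ?_⟩
  rintro C₀ hC₀ T rm rp u hT hrm h_lt ⟨U, hU, hKU, hu⟩ h_ineq h_four
  let P := ShellScales.ofCylinder hd₁ hC₀ hT hrm h_lt h_four
  have h_shell : {x | radP d₁ d₂ x ∈ Icc rm rp ∧ zradP d₁ d₂ x ≤ rp} = P.shell :=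
    (ShellScales.shell_ofCylinder ..).symm
  have h_inner : {x | 10 * rm ≤ radP d₁ d₂ x ∧ radP d₁ d₂ x ≤ rp / 2 ∧ zradP d₁ d₂ x ≤ rp / 2} =
      P.innerShell := (ShellScales.innerShell_ofCylinder ..).symm
  have h_sqrt : ((C₀ * T) ^ (1 / 2 : ℝ))⁻¹ = √P.κ := by
    rw [← Real.sqrt_eq_rpow]
    exact (Real.sqrt_inv _).symm
  have h := h_main P u U hU (fun z hz => hKU ⟨hz.1, h_shell.ge hz.2⟩) hu fun t ht x hx =>
    h_sqrt ▸ h_ineq t ht x (h_shell.ge hx).1 (h_shell.ge hx).2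
  have h_C₀ : (P.κ * P.T)⁻¹ = C₀ := by
    change ((C₀ * T)⁻¹ * T)⁻¹ = C₀
    field_simp
  have h_exp : -(rm * rp) / (4 * C₀ * T) = -((C₀ * T)⁻¹ * (rm * rp)) / 4 := by field_simp
  have h_div (a : ℝ) : 2 * a / (C₀ * T) = 2 * (C₀ * T)⁻¹ * a := by field_simp
  rw [h_C₀] at h
  simp only [h_shell, h_inner, h_exp, h_div]
  exact h
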